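/- arXiv:2101.05835 — 9 statements merged into one kernel-verified Lean document; each statement's English description precedes it below -/
import Mathlib

section
/- Fix z > 0. There exist a constant C > 0 and an integer N ≥ 2 such that for every integer n ≥ N, setting ν = n − 1/2, the ratio of consecutive half-integer-order Bessel functions of the second kind satisfies z/(2ν) − (1/6)·z/ν² − C/ν³ ≤ Y_{ν−1}(z)/Y_ν(z) ≤ z/(2ν) + (7/6)·z/ν² + C/ν³, where Y_{ν−1}(z)/Y_ν(z) = y_{n−2}(z)/y_{n−1}(z) in terms of spherical Bessel functions of the second kind. -/
/-- Spherical Bessel function of the first kind `j_n`, defined by the standard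
recurrence `j_{n+1}(z) = ((2n+1)/z) j_n(z) - j_{n-1}(z)`. -/
noncomputable def jsph : ℕ → ℝ → ℝ
  | 0, z => Real.sin z / z
  | 1, z => Real.sin z / z ^ 2 - Real.cos z / z
  | (n + 2), z => ((2 * (n : ℝ) + 3) / z) * jsph (n + 1) z - jsph n z

/-- Spherical Bessel function of the second kind `y_n`, defined by the standard
recurrence `y_{n+1}(z) = ((2n+1)/z) y_n(z) - y_{n-1}(z)`. -/
noncomputable def ysph : ℕ → ℝ → ℝ
  | 0, z => -Real.cos z / z
  | 1, z => -Real.cos z / z ^ 2 - Real.sin z / z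
  | (n + 2), z => ((2 * (n : ℝ) + 3) / z) * ysph (n + 1) z - ysph n z

/-- Spherical Hankel function of the first kind `h^{(1)}_n`. -/
noncomputable def h1sph (n : ℕ) (z : ℝ) : ℂ :=
  (jsph n z : ℂ) + Complex.I * (ysph n z : ℂ)

/-- Spherical Hankel function of the second kind `h^{(2)}_n`. -/
noncomputable def h2sph (n : ℕ) (z : ℝ) : ℂ :=
  (jsph n z : ℂ) - Complex.I * (ysph n z : ℂ)

section aux
open intervalIntegral Real

noncomputable def bI (n : ℕ) (θ : ℝ) : ℝ := ∫ x in (-1)..1, (1 - x ^ 2) ^ n * cos (x * θ)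

lemma bI_zero (θ : ℝ) : bI 0 θ * θ = 2 * sin θ := by
  rw [mul_comm, bI]
  simp [mul_integral_comp_mul_right, two_mul]

lemma bI_rec' (θ : ℝ) (n : ℕ) :
    bI (n + 1) θ * θ ^ 2 = - (2 * 2 * ((n + 1) * (0 ^ n * cos θ))) +
      2 * (n + 1) * (2 * n + 1) * bI n θ - 4 * (n + 1) * n * bI (n - 1) θ := by
  rw [bI]
  let f (x : ℝ) : ℝ := 1 - x ^ 2
  let u₁ (x : ℝ) : ℝ := f x ^ (n + 1)
  let u₁' (x : ℝ) : ℝ := - (2 * (n + 1) * x * f x ^ n)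
  let v₁ (x : ℝ) : ℝ := sin (x * θ)
  let v₁' (x : ℝ) : ℝ := cos (x * θ) * θ
  let u₂ (x : ℝ) : ℝ := x * (f x) ^ n
  let u₂' (x : ℝ) : ℝ := (f x) ^ n - 2 * n * x ^ 2 * (f x) ^ (n - 1)
  let v₂ (x : ℝ) : ℝ := cos (x * θ)
  let v₂' (x : ℝ) : ℝ := -sin (x * θ) * θ
  have hfd : Continuous f := by fun_prop
  have hu₁d : Continuous u₁' := by fun_prop
  have hv₁d : Continuous v₁' := by fun_prop
  have hu₂d : Continuous u₂' := by fun_prop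
  have hv₂d : Continuous v₂' := by fun_prop
  have hu₁_eval_one : u₁ 1 = 0 := by simp only [u₁, f]; simp
  have hu₁_eval_neg_one : u₁ (-1) = 0 := by simp only [u₁, f]; simp
  have t : u₂ 1 * v₂ 1 - u₂ (-1) * v₂ (-1) = 2 * (0 ^ n * cos θ) := by simp [u₂, v₂, f, ← two_mul]
  have hf (x) : HasDerivAt f (- 2 * x) x := by
    convert! (hasDerivAt_pow 2 x).const_sub 1 using 1
    simp
  have hu₁ (x) : HasDerivAt u₁ (u₁' x) x := by
    convert! (hf x).pow _ using 1
    simp only [Nat.add_succ_sub_one, u₁', Nat.cast_add_one]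
    ring
  have hv₁ (x) : HasDerivAt v₁ (v₁' x) x := (hasDerivAt_mul_const θ).sin
  have hu₂ (x) : HasDerivAt u₂ (u₂' x) x := by
    convert! (hasDerivAt_id' x).fun_mul ((hf x).fun_pow _) using 1
    simp only [u₂']
    ring
  have hv₂ (x) : HasDerivAt v₂ (v₂' x) x := (hasDerivAt_mul_const θ).cos
  convert_to (∫ (x : ℝ) in (-1)..1, u₁ x * v₁' x) * θ = _ using 1
  · simp_rw [u₁, v₁', f, ← intervalIntegral.integral_mul_const, sq θ, mul_assoc]
  rw [integral_mul_deriv_eq_deriv_mul (fun x _ => hu₁ x) (fun x _ => hv₁ x)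
    (hu₁d.intervalIntegrable _ _) (hv₁d.intervalIntegrable _ _), hu₁_eval_one, hu₁_eval_neg_one,
    zero_mul, zero_mul, sub_zero, zero_sub, ← integral_neg, ← integral_mul_const]
  convert_to ((-2 : ℝ) * (n + 1)) * ∫ (x : ℝ) in (-1)..1, (u₂ x * v₂' x) = _ using 1
  · rw [← integral_const_mul]
    congr 1 with x
    dsimp [u₁', v₁, u₂, v₂']
    ring
  rw [integral_mul_deriv_eq_deriv_mul (fun x _ => hu₂ x) (fun x _ => hv₂ x)
    (hu₂d.intervalIntegrable _ _) (hv₂d.intervalIntegrable _ _),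
    mul_sub, t, neg_mul, neg_mul, neg_mul, sub_neg_eq_add]
  have (x : _) : u₂' x = (2 * n + 1) * f x ^ n - 2 * n * f x ^ (n - 1) := by
    cases n with
    | zero => simp [u₂']
    | succ n => ring!
  simp_rw [this, sub_mul, mul_assoc _ _ (v₂ _)]
  have : Continuous v₂ := by fun_prop
  rw [mul_mul_mul_comm, integral_sub, mul_sub, add_sub_assoc]
  · congr 1
    simp_rw [integral_const_mul]
    ring!
  all_goals exact Continuous.intervalIntegrable (by fun_prop) _ _


lemma bI_rec (θ : ℝ) (n : ℕ) :
    bI (n + 2) θ * θ ^ 2 =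
      2 * (n + 2) * (2 * n + 3) * bI (n + 1) θ - 4 * (n + 2) * (n + 1) * bI n θ := by
  rw [bI_rec' θ (n + 1)]
  push_cast
  simp
  ring

lemma bI_one (θ : ℝ) : bI 1 θ * θ ^ 3 = 4 * sin θ - 4 * θ * cos θ := by
  have h := bI_rec' θ 0
  have h0 := bI_zero θ
  simp at h
  linear_combination θ * h + 2 * h0

lemma bI_abs (θ : ℝ) (n : ℕ) : |bI n θ| ≤ 2 := by
  have h := intervalIntegral.norm_integral_le_of_norm_le_const (a := -1) (b := 1) (C := 1)
    (f := fun x : ℝ => (1 - x ^ 2) ^ n * cos (x * θ)) ?_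
  · rw [Real.norm_eq_abs] at h
    rw [bI]
    norm_num at h ⊢
    exact h
  · intro x hx
    rw [Set.uIoc_of_le (by norm_num)] at hx
    have h1 : |1 - x ^ 2| ≤ 1 := by
      rw [abs_le]; constructor <;> nlinarith [hx.1, hx.2]
    rw [Real.norm_eq_abs, abs_mul, abs_pow]
    exact mul_le_one₀ (pow_le_one₀ (abs_nonneg _) h1) (abs_nonneg _) (abs_cos_le_one _)

lemma jsph_eq (z : ℝ) (hz : 0 < z) : ∀ n : ℕ,
    jsph n z * (2 * 2 ^ n * (n.factorial : ℝ)) = z ^ n * bI n z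
  | 0 => by
    have h := bI_zero z
    simp [jsph]
    field_simp
    linarith
  | 1 => by
    have h := bI_one z
    simp [jsph]
    field_simp
    linarith
  | (n + 2) => by
    have h0 := jsph_eq z hz n
    have h1 := jsph_eq z hz (n + 1)
    have h := bI_rec z n
    have hj : z * jsph (n + 2) z = (2 * (n : ℝ) + 3) * jsph (n + 1) z - z * jsph n z := by
      rw [jsph]; field_simp
    rw [Nat.factorial_succ] at h1
    rw [Nat.factorial_succ, Nat.factorial_succ]
    push_cast at *
    apply mul_left_cancel₀ hz.ne'
    have e : z * (z ^ (n + 2) * bI (n + 2) z) = z ^ (n + 1) * (bI (n + 2) z * z ^ 2) := by ring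
    rw [e, h]
    linear_combination (2 * 2 ^ (n + 2) * (((n : ℝ) + 1 + 1) * (((n : ℝ) + 1) * (n.factorial : ℝ)))) * hj
      + (2 * (n + 2) * (2 * n + 3)) * h1 - (4 * z * (n + 2) * (n + 1)) * h0

lemma jsph_tendsto (z : ℝ) (hz : 0 < z) :
    Filter.Tendsto (fun n => |jsph n z|) Filter.atTop (nhds 0) := by
  refine squeeze_zero (fun n => abs_nonneg _) (fun n => ?_)
    (FloorSemiring.tendsto_pow_div_factorial_atTop z)
  have h := congrArg abs (jsph_eq z hz n)
  have hf : (0 : ℝ) < n.factorial := by exact_mod_cast n.factorial_pos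
  have hp : (1 : ℝ) ≤ 2 ^ n := one_le_pow₀ (by norm_num)
  have hzn : 0 < z ^ n := by positivity
  rw [abs_mul, abs_mul (z ^ n), abs_of_pos hzn,
    abs_of_pos (by positivity : (0 : ℝ) < 2 * 2 ^ n * (n.factorial : ℝ))] at h
  rw [le_div_iff₀ hf]
  have h2 := mul_le_mul_of_nonneg_left (bI_abs z n) hzn.le
  have h3 : 0 ≤ |jsph n z| * (n.factorial : ℝ) := by positivity
  nlinarith [mul_le_mul_of_nonneg_left hp h3]

lemma wronsk (z : ℝ) (hz : 0 < z) (n : ℕ) :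
    jsph (n + 1) z * ysph n z - jsph n z * ysph (n + 1) z = 1 / z ^ 2 := by
  induction n with
  | zero =>
    simp only [zero_add, jsph, ysph]
    field_simp
    linear_combination z * sin_sq_add_cos_sq z
  | succ n ih =>
    rw [jsph, ysph, ← ih]
    ring

lemma exists_grow (z : ℝ) (hz : 0 < z) (M : ℕ) :
    ∃ m ≥ M, |ysph m z| ≤ |ysph (m + 1) z| := by
  by_contra! hc
  have hb : ∀ m ≥ M, |ysph m z| ≤ |ysph M z| := by
    intro m hm
    induction m, hm using Nat.le_induction with
    | base => exact le_rfl
    | succ m hm ih => exact (hc m hm).le.trans ih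
  have hj := jsph_tendsto z hz
  have hj1 := hj.comp (Filter.tendsto_add_atTop_nat 1)
  have ht := (hj1.add hj).mul_const |ysph M z|
  simp only [add_zero, zero_mul] at ht
  have : 1 / z ^ 2 ≤ 0 := by
    refine ge_of_tendsto ht ?_
    filter_upwards [Filter.eventually_ge_atTop M] with m hm
    rw [← wronsk z hz m]
    refine (le_abs_self _).trans ((abs_sub _ _).trans ?_)
    rw [abs_mul, abs_mul, add_mul]
    exact add_le_add (mul_le_mul_of_nonneg_left (hb m hm) (abs_nonneg _))
      (mul_le_mul_of_nonneg_left (hb (m + 1) (by omega)) (abs_nonneg _))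
  have : 0 < 1 / z ^ 2 := by positivity
  linarith

lemma ysph_rec (z : ℝ) (hz : 0 < z) (m : ℕ) :
    (2 * (m : ℝ) + 3) * ysph (m + 1) z = z * (ysph (m + 2) z + ysph m z) := by
  rw [ysph]; field_simp; ring

lemma abs_step (z : ℝ) (hz : 0 < z) (m : ℕ) (h : |ysph m z| ≤ |ysph (m + 1) z|) :
    (2 * (m : ℝ) + 3 - z) * |ysph (m + 1) z| ≤ z * |ysph (m + 2) z| := by
  have h1 := congrArg abs (ysph_rec z hz m)
  rw [abs_mul, abs_mul, abs_of_pos hz, abs_of_pos (by positivity : 0 < 2 * (m : ℝ) + 3)] at h1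
  have h2 := abs_add_le (ysph (m + 2) z) (ysph m z)
  nlinarith

lemma exists_bound (z : ℝ) (hz : 0 < z) :
    ∃ M : ℕ, ∀ m ≥ M, ysph (m + 1) z ≠ 0 ∧ z * |ysph m z| ≤ |ysph (m + 1) z| := by
  obtain ⟨K, hK⟩ := exists_nat_ge (z + z ^ 2)
  obtain ⟨M, hM, h0⟩ := exists_grow z hz K
  have hmon : ∀ m ≥ M, |ysph m z| ≤ |ysph (m + 1) z| := by
    intro m hm
    induction m, hm using Nat.le_induction with
    | base => exact h0
    | succ m hm ih =>
      have h1 := abs_step z hz m ih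
      have h2 : (K : ℝ) ≤ m := by exact_mod_cast hM.trans hm
      have h3 : z ≤ 2 * (m : ℝ) + 3 - z := by nlinarith [sq_nonneg (z - 1)]
      exact le_of_mul_le_mul_left
        ((mul_le_mul_of_nonneg_right h3 (abs_nonneg _)).trans h1) hz
  refine ⟨M + 1, fun m hm => ?_⟩
  constructor
  · intro h
    have h1 := hmon m (by omega)
    rw [h, abs_zero] at h1
    have h2 := abs_eq_zero.1 (le_antisymm h1 (abs_nonneg _))
    have h3 := wronsk z hz m
    rw [h, h2] at h3
    have : 0 < 1 / z ^ 2 := by positivity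
    linarith
  · obtain ⟨k, rfl⟩ : ∃ k, m = k + 1 := ⟨m - 1, by omega⟩
    have h1 := abs_step z hz k (hmon k (by omega))
    have h2 : (K : ℝ) ≤ k := by exact_mod_cast hM.trans (by omega : M ≤ k)
    have h3 : z * z ≤ 2 * (k : ℝ) + 3 - z := by nlinarith
    have h4 := (mul_le_mul_of_nonneg_right h3 (abs_nonneg (ysph (k + 1) z))).trans h1
    rw [mul_assoc] at h4
    exact le_of_mul_le_mul_left h4 hz

end aux

/-- For fixed `z > 0`, asymptotic two-sided bound on the ratio
`Y_{ν-1}(z)/Y_ν(z) = y_{n-2}(z)/y_{n-1}(z)` with `ν = n - 1/2`. -/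
theorem ratio_bessel_Y_asymptotic (z : ℝ) (hz : 0 < z) :
    ∃ C : ℝ, 0 < C ∧ ∃ N : ℕ, 2 ≤ N ∧ ∀ n : ℕ, N ≤ n →
      z / (2 * ((n : ℝ) - 1/2)) - (1/6) * z / ((n : ℝ) - 1/2) ^ 2
          - C / ((n : ℝ) - 1/2) ^ 3
        ≤ ysph (n - 2) z / ysph (n - 1) z ∧
      ysph (n - 2) z / ysph (n - 1) z
        ≤ z / (2 * ((n : ℝ) - 1/2)) + (7/6) * z / ((n : ℝ) - 1/2) ^ 2
          + C / ((n : ℝ) - 1/2) ^ 3 := by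
  obtain ⟨M, hM⟩ := exists_bound z hz
  refine ⟨1, one_pos, M + 10, by omega, fun n hn => ?_⟩
  obtain ⟨m, rfl⟩ : ∃ m, n = m + 3 := ⟨n - 3, by omega⟩
  obtain ⟨hne, hb⟩ := hM m (by omega)
  obtain ⟨hne2, -⟩ := hM (m + 1) (by omega)
  have hrec := ysph_rec z hz m
  have hm : (7 : ℝ) ≤ m := by exact_mod_cast (by omega : 7 ≤ m)
  rw [show m + 3 - 2 = m + 1 by omega, show m + 3 - 1 = m + 2 by omega]
  set ε := z * (ysph m z / ysph (m + 1) z) with hε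
  have he : |ε| ≤ 1 := by
    rw [hε, abs_mul, abs_div, abs_of_pos hz, ← mul_div_assoc]
    exact div_le_one_of_le₀ hb (abs_nonneg _)
  obtain ⟨he1, he2⟩ := abs_le.1 he
  have hr : ysph (m + 1) z / ysph (m + 2) z = z / (2 * (m : ℝ) + 3 - ε) := by
    have hd : 2 * (m : ℝ) + 3 - ε ≠ 0 := by
      have : 0 < 2 * (m : ℝ) + 3 - ε := by linarith
      exact this.ne'
    rw [div_eq_div_iff hne2 hd]
    have : ε * ysph (m + 1) z = z * ysph m z := by
      rw [hε]; field_simp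
    linear_combination hrec - this
  rw [hr]
  push_cast
  obtain ⟨v, hv⟩ : ∃ v : ℝ, v = (m : ℝ) + 3 - 1 / 2 := ⟨_, rfl⟩
  rw [← hv, show 2 * (m : ℝ) + 3 - ε = 2 * v - 2 - ε by rw [hv]; ring]
  have hv9 : 9 ≤ v := by rw [hv]; linarith
  have hv0 : 0 < v := by linarith
  have p1 : 0 < (1/6) * z / v ^ 2 := by positivity
  have p2 : 0 < 1 / v ^ 3 := by positivity
  constructor
  · have : z / (2 * v) ≤ z / (2 * v - 2 - ε) :=
      div_le_div_of_nonneg_left hz.le (by linarith) (by linarith)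
    linarith
  · have h1 : z / (2 * v - 2 - ε) ≤ z / (2 * v - 3) :=
      div_le_div_of_nonneg_left hz.le (by linarith) (by linarith)
    have h2 : z / (2 * v - 3) ≤ z / (2 * v) + (7/6) * z / v ^ 2 := by
      have e : z / (2 * v) + (7/6) * z / v ^ 2 = z * (3 * v + 7) / (6 * v ^ 2) := by
        field_simp
        ring
      rw [e, div_le_div_iff₀ (by linarith) (by positivity), mul_assoc]
      apply mul_le_mul_of_nonneg_left _ hz.le
      nlinarith
    linarith
end

section
/- Let 0 < R' < R and 0 < κ_p < κ_s. There exists an integer N such that for every integer n ≥ N, with ν = n − 1/2, the Bessel functions of the second kind of half-integer order ν satisfy |Y_ν(κ_p R)/Y_ν(κ_p R') − Y_ν(κ_s R)/Y_ν(κ_s R')| ≤ (7/3)·(κ_s(κ_s − κ_p)/ν)·R·(R − R')·(R'/R)^ν. -/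
/-- Bessel function of the second kind of half-integer order `ν = n - 1/2`:
`Y_{n-1/2}(z) = √(2z/π) y_{n-1}(z)`. -/
noncomputable def Yhalf (n : ℕ) (z : ℝ) : ℝ := Real.sqrt (2 * z / Real.pi) * ysph (n - 1) z

open Filter Topology
noncomputable section BesselAux

def bP (x : ℝ) (k : ℕ) : ℝ := ∏ i ∈ Finset.range k, (2 * (i : ℝ) + 1 - 2 * x)

def bC (x : ℝ) (k : ℕ) : ℝ := (-1) ^ k / ((k.factorial : ℝ) * bP x k)

def bD (m : ℕ) : ℝ := ∏ i ∈ Finset.range m, (2 * (i : ℝ) + 1)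

def bf (z : ℝ) (m : ℕ) : ℝ := -(z ^ (m + 1) * ysph m z / bD m)

lemma bD_pos (m : ℕ) : 0 < bD m := Finset.prod_pos (fun i _ => by positivity)

lemma odd_ge (i m : ℤ) : (1:ℝ) ≤ |2 * (i : ℝ) + 1 - 2 * (m : ℝ)| := by
  have h : (1:ℤ) ≤ |2 * i + 1 - 2 * m| := by
    apply Int.one_le_abs; omega
  exact_mod_cast h

lemma bP_ge (m : ℤ) (k : ℕ) : 1 ≤ |bP (m : ℝ) k| := by
  unfold bP
  rw [Finset.abs_prod]
  have := Finset.prod_le_prod (s := Finset.range k) (f := fun _ : ℕ => (1:ℝ))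
    (g := fun i : ℕ => |2 * (i : ℝ) + 1 - 2 * (m : ℝ)|) (fun _ _ => by norm_num)
    (fun i _ => by exact_mod_cast odd_ge (i : ℤ) m)
  simpa using this

lemma bP_ne (m : ℤ) (k : ℕ) : bP (m : ℝ) k ≠ 0 := by
  intro h
  have := bP_ge m k
  rw [h] at this; norm_num at this

lemma bP_succ (x : ℝ) (k : ℕ) : bP x (k + 1) = (1 - 2 * x) * bP (x - 1) k := by
  unfold bP
  rw [Finset.prod_range_succ', mul_comm]
  congr 1
  · simp
  · apply Finset.prod_congr rfl
    intro i _; push_cast; ring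

lemma bP_succ' (x : ℝ) (k : ℕ) : bP x (k + 1) = bP x k * (2 * (k:ℝ) + 1 - 2 * x) := by
  unfold bP
  rw [Finset.prod_range_succ]

lemma bC_rec (m : ℤ) (k : ℕ) :
    bC ((m:ℝ) + 1) (k + 1) = bC m (k + 1)
      - 2 * bC ((m:ℝ) - 1) k / ((2 * (m:ℝ) + 1) * (2 * (m:ℝ) - 1)) := by
  have h1 : bP ((m:ℝ) + 1) (k+1) * (2 * (k:ℝ) + 1 - 2 * m)
      = (-1 - 2 * (m:ℝ)) * (1 - 2 * m) * bP ((m:ℝ) - 1) k := by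
    have e1 := bP_succ ((m:ℝ)+1) k
    have e2 := bP_succ (m:ℝ) k
    have e3 := bP_succ' (m:ℝ) k
    rw [e1, show (m:ℝ) + 1 - 1 = m by ring]
    rw [e2] at e3
    linear_combination (-1 - 2 * (m:ℝ)) * (-e3)
  have h2 := bP_succ (m:ℝ) k
  have n1 : bP ((m:ℝ) - 1) k ≠ 0 := by exact_mod_cast bP_ne (m-1) k
  have a1 : (2 * (k:ℝ) + 1 - 2 * m) ≠ 0 := by
    have := odd_ge k m
    intro h; simp only [Int.cast_natCast] at this; rw [h] at this; norm_num at this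
  have a2 : (2 * (m:ℝ) + 1) ≠ 0 := by
    have := odd_ge m 0
    intro h; simp only [Int.cast_zero, mul_zero, sub_zero] at this; rw [h] at this; norm_num at this
  have a3 : (2 * (m:ℝ) - 1) ≠ 0 := by
    have := odd_ge (m-1) 0
    intro h; push_cast at this
    rw [show 2 * ((m:ℝ) - 1) + 1 - 2 * 0 = 2 * m - 1 by ring, h] at this; norm_num at this
  have h3 : bP ((m:ℝ) + 1) (k+1)
      = (2 * (m:ℝ) + 1) * (2 * m - 1) * bP ((m:ℝ) - 1) k / (2 * (k:ℝ) + 1 - 2 * m) := by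
    rw [eq_div_iff a1, h1]; ring
  have h2' : bP (m:ℝ) (k+1) = -((2 * (m:ℝ) - 1) * bP ((m:ℝ) - 1) k) := by rw [h2]; ring
  unfold bC
  rw [h3, h2', Nat.factorial_succ]
  have n4 : ((k.factorial : ℕ) : ℝ) ≠ 0 := by positivity
  have n5 : ((k:ℝ) + 1) ≠ 0 := by positivity
  push_cast
  field_simp
  ring

lemma bC_zero (x : ℝ) : bC x 0 = 1 := by simp [bC, bP]

lemma hasSum_step (m : ℤ) (t a b : ℝ)
    (ha : HasSum (fun k => bC ((m:ℝ) - 1) k * t ^ k) a)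
    (hb : HasSum (fun k => bC (m:ℝ) k * t ^ k) b) :
    HasSum (fun k => bC ((m:ℝ) + 1) k * t ^ k)
      (b - 2 * t * a / ((2 * (m:ℝ) + 1) * (2 * (m:ℝ) - 1))) := by
  rw [← hasSum_nat_add_iff' 1] at hb ⊢
  have := hb.sub (ha.mul_left (2 * t / ((2 * (m:ℝ) + 1) * (2 * (m:ℝ) - 1))))
  simp only [Finset.sum_range_one, bC_zero, pow_zero] at this ⊢
  convert this using 1
  · funext k
    rw [bC_rec]; ring
  · ring

lemma fact0 (k : ℕ) : (((2 * k).factorial : ℕ) : ℝ) = 2 ^ k * k.factorial * bP 0 k := by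
  induction k with
  | zero => simp [bP]
  | succ k ih =>
    rw [bP_succ', show 2 * (k+1) = (2 * k + 1) + 1 by ring, Nat.factorial_succ, Nat.factorial_succ,
      Nat.factorial_succ]
    push_cast
    rw [ih]; ring

lemma fact1 (k : ℕ) : (((2 * k + 1).factorial : ℕ) : ℝ) = 2 ^ k * k.factorial * bP (-1) k := by
  induction k with
  | zero => simp [bP]
  | succ k ih =>
    rw [bP_succ', show 2 * (k+1) + 1 = (2 * k + 1 + 1) + 1 by ring, Nat.factorial_succ (2*k+1+1),
      Nat.factorial_succ (2*k+1), Nat.factorial_succ k]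
    push_cast
    rw [ih]; ring

lemma hasSum0 (z : ℝ) : HasSum (fun k => bC 0 k * (z ^ 2 / 2) ^ k) (Real.cos z) := by
  convert Real.hasSum_cos z using 1
  funext k
  have : bP 0 k ≠ 0 := by exact_mod_cast bP_ne 0 k
  rw [fact0, bC, div_pow, pow_mul]
  field_simp

lemma hasSum1 (z : ℝ) (hz : z ≠ 0) :
    HasSum (fun k => bC (-1) k * (z ^ 2 / 2) ^ k) (Real.sin z / z) := by
  have h := (Real.hasSum_sin z).div_const z
  refine Eq.subst (motive := fun g : ℕ → ℝ => HasSum g (Real.sin z / z)) ?_ h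
  funext k
  symm
  have : bP (-1) k ≠ 0 := by exact_mod_cast bP_ne (-1) k
  rw [fact1, bC, div_pow, pow_succ z (2 * k), pow_mul]
  field_simp

lemma bf_rec (z : ℝ) (hz : z ≠ 0) (m : ℕ) :
    bf z (m + 2) = bf z (m + 1) - z ^ 2 * bf z m / ((2 * (m:ℝ) + 3) * (2 * (m:ℝ) + 1)) := by
  have hd := (bD_pos m).ne'
  have e1 : bD (m + 1) = bD m * (2 * (m:ℝ) + 1) := by simp [bD, Finset.prod_range_succ]
  have e2 : bD (m + 2) = bD m * (2 * (m:ℝ) + 1) * (2 * (m:ℝ) + 3) := by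
    simp [bD, Finset.prod_range_succ]; left; ring
  have p1 : (2 * (m:ℝ) + 1) ≠ 0 := by positivity
  have p2 : (2 * (m:ℝ) + 3) ≠ 0 := by positivity
  unfold bf
  rw [e1, e2, ysph]
  field_simp
  ring

lemma bf_hasSum (z : ℝ) (hz : z ≠ 0) (m : ℕ) :
    HasSum (fun k => bC (m:ℝ) k * (z ^ 2 / 2) ^ k) (bf z m) ∧
    HasSum (fun k => bC ((m:ℝ) + 1) k * (z ^ 2 / 2) ^ k) (bf z (m + 1)) := by
  induction m with
  | zero =>
    have h0 := hasSum0 z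
    have f0 : bf z 0 = Real.cos z := by
      simp [bf, bD, ysph]; field_simp
    have f1 : bf z 1 = Real.cos z + z * Real.sin z := by
      simp [bf, bD, ysph]; field_simp; ring
    refine ⟨by simpa [f0] using h0, ?_⟩
    have := hasSum_step 0 (z^2/2) (Real.sin z / z) (Real.cos z)
      (by simpa using hasSum1 z hz) (by simpa using h0)
    rw [zero_add, f1]
    convert this using 1
    · simp
    · push_cast; field_simp; ring
  | succ m ih =>
    refine ⟨by simpa using ih.2, ?_⟩
    have := hasSum_step ((m:ℤ)+1) (z^2/2) (bf z m) (bf z (m+1))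
      (by simpa using ih.1) (by simpa using ih.2)
    rw [show m + 1 + 1 = m + 2 by ring, bf_rec z hz]
    convert this using 1
    · simp
    · push_cast; congr 1; ring

lemma bf_bound (z : ℝ) (hz : z ≠ 0) (m : ℕ) (hm : 2 ≤ m) :
    |bf z m - 1 - (z ^ 2 / 2) / (2 * (m:ℝ) - 1)|
      ≤ (z ^ 2 / 2) ^ 2 * Real.exp (z ^ 2 / 2) / ((2 * (m:ℝ) - 1) * (2 * (m:ℝ) - 3)) := by
  have hm' : (2:ℝ) ≤ m := by exact_mod_cast hm
  set t := z ^ 2 / 2 with ht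
  have ht0 : 0 ≤ t := by positivity
  have h := (bf_hasSum z hz m).1
  rw [← ht] at h
  rw [← hasSum_nat_add_iff' 2] at h
  have hp1 : 0 < 2 * (m:ℝ) - 1 := by linarith
  have hp3 : 0 < 2 * (m:ℝ) - 3 := by linarith
  have e : bf z m - ∑ i ∈ Finset.range 2, bC (m:ℝ) i * t ^ i
      = bf z m - 1 - t / (2 * (m:ℝ) - 1) := by
    have : (1 - 2 * (m:ℝ)) ≠ 0 := by linarith
    simp [Finset.sum_range_succ, bC, bP]
    rw [show 1 - 2 * (m:ℝ) = -(2 * (m:ℝ) - 1) by ring]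
    field_simp
    ring
  rw [e] at h
  have hexp : HasSum (fun k : ℕ => t ^ k / (k.factorial : ℝ)) (Real.exp t) := by
    rw [Real.exp_eq_exp_ℝ]; exact NormedSpace.expSeries_div_hasSum_exp t
  have hg := hexp.mul_left (t ^ 2 / ((2 * (m:ℝ) - 1) * (2 * (m:ℝ) - 3)))
  have hb : ∀ k : ℕ, ‖bC (m:ℝ) (k + 2) * t ^ (k + 2)‖
      ≤ t ^ 2 / ((2 * (m:ℝ) - 1) * (2 * (m:ℝ) - 3)) * (t ^ k / (k.factorial : ℝ)) := by
    intro k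
    have e2 : bP (m:ℝ) (k + 2) = (2 * (m:ℝ) - 1) * (2 * (m:ℝ) - 3) * bP ((m:ℝ) - 2) k := by
      rw [bP_succ, bP_succ]
      rw [show (m:ℝ) - 1 - 1 = m - 2 by ring]; ring
    have g : 1 ≤ |bP ((m:ℝ) - 2) k| := by exact_mod_cast bP_ge ((m:ℤ) - 2) k
    have hf : (k.factorial : ℝ) ≤ ((k+2).factorial : ℕ) := by
      exact_mod_cast Nat.factorial_le (by omega)
    have hkp : (0:ℝ) < k.factorial := by positivity
    rw [Real.norm_eq_abs, bC, e2, abs_mul, abs_div, abs_pow, abs_neg, abs_one, one_pow,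
      abs_mul, abs_mul, abs_mul, abs_of_pos hp1, abs_of_pos hp3, abs_of_nonneg (pow_nonneg ht0 _),
      Nat.abs_cast, div_mul_div_comm, ← pow_add, div_mul_eq_mul_div, one_mul, add_comm 2 k]
    apply div_le_div_of_nonneg_left (by positivity) (by positivity)
    calc (2 * (m:ℝ) - 1) * (2 * (m:ℝ) - 3) * k.factorial
        = k.factorial * ((2 * (m:ℝ) - 1) * (2 * (m:ℝ) - 3) * 1) := by ring
      _ ≤ _ := by gcongr
  have := tsum_of_norm_bounded hg hb
  rw [h.tsum_eq, Real.norm_eq_abs] at this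
  refine this.trans (le_of_eq ?_)
  ring

lemma lin_tendsto (c : ℝ) : Tendsto (fun m : ℕ => 2 * (m:ℝ) - c) atTop atTop :=
  tendsto_atTop_add_const_right _ (-c)
    (tendsto_natCast_atTop_atTop.const_mul_atTop (by norm_num : (0:ℝ) < 2))

lemma bf_lim (z : ℝ) (hz : z ≠ 0) :
    Tendsto (fun m : ℕ => (2 * (m:ℝ) - 1) * (bf z m - 1)) atTop (𝓝 (z ^ 2 / 2)) := by
  rw [tendsto_iff_norm_sub_tendsto_zero]
  have hlim : Tendsto (fun m : ℕ => (z ^ 2 / 2) ^ 2 * Real.exp (z ^ 2 / 2) / (2 * (m:ℝ) - 3))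
      atTop (𝓝 0) := (lin_tendsto 3).const_div_atTop _
  refine squeeze_zero' (Eventually.of_forall fun _ => norm_nonneg _) ?_ hlim
  filter_upwards [eventually_ge_atTop 2] with m hm
  have hm' : (2:ℝ) ≤ m := by exact_mod_cast hm
  have hp1 : 0 < 2 * (m:ℝ) - 1 := by linarith
  have hp3 : 0 < 2 * (m:ℝ) - 3 := by linarith
  have := mul_le_mul_of_nonneg_left (bf_bound z hz m hm) hp1.le
  rw [← abs_of_pos hp1, ← abs_mul, abs_of_pos hp1] at this
  rw [Real.norm_eq_abs]
  have n1 := hp1.ne'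
  have n3 := hp3.ne'
  have e1 : (2 * (m:ℝ) - 1) * (bf z m - 1) - z ^ 2 / 2
      = (2 * (m:ℝ) - 1) * (bf z m - 1 - z ^ 2 / 2 / (2 * (m:ℝ) - 1)) := by
    field_simp
  rw [e1]
  refine this.trans (le_of_eq ?_)
  field_simp

lemma bf_lim1 (z : ℝ) (hz : z ≠ 0) : Tendsto (fun m : ℕ => bf z m) atTop (𝓝 1) := by
  have h := ((bf_lim z hz).mul (tendsto_inv_atTop_zero.comp (lin_tendsto 1))).add_const 1
  simp only [mul_zero, zero_add] at h
  refine h.congr' ?_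
  filter_upwards [eventually_ge_atTop 2] with m hm
  have hm' : (2:ℝ) ≤ m := by exact_mod_cast hm
  have hp1 : 2 * (m:ℝ) - 1 ≠ 0 := by linarith
  simp only [Function.comp]
  field_simp
  ring

lemma bf_ratio (a b : ℝ) (ha : a ≠ 0) (hb : b ≠ 0) :
    Tendsto (fun m : ℕ => (2 * (m:ℝ) + 1) * (bf a m / bf b m - 1)) atTop
      (𝓝 (a ^ 2 / 2 - b ^ 2 / 2)) := by
  have hA := bf_lim1 a ha
  have hB := bf_lim1 b hb
  have hdiff := (((bf_lim a ha).sub (bf_lim b hb)).add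
    ((hA.sub hB).const_mul 2)).div hB one_ne_zero
  simp only [sub_self, mul_zero, add_zero, div_one] at hdiff
  refine hdiff.congr' ?_
  filter_upwards [hB.eventually_ne one_ne_zero] with m hm
  simp only [Pi.div_apply]
  field_simp
  ring

lemma Y_ratio (κ R R' : ℝ) (hκ : 0 < κ) (hR : 0 < R) (hR' : 0 < R') (m : ℕ) :
    Yhalf (m + 1) (κ * R) / Yhalf (m + 1) (κ * R')
      = (R' / R) ^ (((m + 1 : ℕ) : ℝ) - 1 / 2) * (bf (κ * R) m / bf (κ * R') m) := by
  have key : ∀ z : ℝ, 0 < z → ysph m z = -(bf z m * bD m / z ^ (m + 1)) := by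
    intro z hz
    have := (bD_pos m).ne'
    unfold bf
    field_simp
  have hpi := Real.pi_pos
  unfold Yhalf
  rw [Nat.add_sub_cancel, key _ (by positivity), key _ (by positivity), mul_div_mul_comm,
    Real.rpow_sub (by positivity), Real.rpow_natCast, ← Real.sqrt_eq_rpow,
    ← Real.sqrt_div (by positivity), neg_div_neg_eq]
  have e : 2 * (κ * R) / Real.pi / (2 * (κ * R') / Real.pi) = (R' / R)⁻¹ := by
    field_simp
  rw [e, Real.sqrt_inv, div_div_div_eq, mul_pow, mul_pow, div_pow]
  have hd := (bD_pos m).ne'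
  have : bf (κ * R) m * bD m * (κ ^ (m + 1) * R' ^ (m + 1)) /
      (κ ^ (m + 1) * R ^ (m + 1) * (bf (κ * R') m * bD m))
      = (bf (κ * R) m / bf (κ * R') m) * (R' ^ (m + 1) / R ^ (m + 1)) := by
    by_cases h : bf (κ * R') m = 0
    · simp [h]
    · field_simp
  rw [this]
  ring

end BesselAux

/-- Difference of ratios of half-integer Bessel functions of the second kind at two
wavenumbers decays like `(R'/R)^ν`. -/
theorem bessel_Y_ratio_difference_bound (R R' κp κs : ℝ)
    (hR' : 0 < R') (hRR : R' < R) (hκp : 0 < κp) (hκ : κp < κs) :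
    ∃ N : ℕ, 1 ≤ N ∧ ∀ n : ℕ, N ≤ n →
      |Yhalf n (κp * R) / Yhalf n (κp * R') - Yhalf n (κs * R) / Yhalf n (κs * R')|
        ≤ (7/3) * (κs * (κs - κp) / ((n : ℝ) - 1/2)) * R * (R - R')
            * (R' / R) ^ ((n : ℝ) - 1/2) := by
  have hR : 0 < R := hR'.trans hRR
  have hκs : 0 < κs := hκp.trans hκ
  have h1 := bf_ratio (κp * R) (κp * R') (by positivity) (by positivity)
  have h2 := bf_ratio (κs * R) (κs * R') (by positivity) (by positivity)
  have h3 := (h1.sub h2).abs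
  have hlt : |(κp * R) ^ 2 / 2 - (κp * R') ^ 2 / 2 - ((κs * R) ^ 2 / 2 - (κs * R') ^ 2 / 2)|
      < (14/3) * (κs * (κs - κp)) * R * (R - R') := by
    have e : (κp * R) ^ 2 / 2 - (κp * R') ^ 2 / 2 - ((κs * R) ^ 2 / 2 - (κs * R') ^ 2 / 2)
        = -(((κs - κp) * (R - R')) * ((κs + κp) * (R + R')) / 2) := by ring
    have hp : 0 < (κs - κp) * (R - R') := mul_pos (by linarith) (by linarith)
    have hq : (κs + κp) * (R + R') ≤ (2 * κs) * (2 * R) :=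
      mul_le_mul (by linarith) (by linarith) (by positivity) (by positivity)
    have hr : 0 < κs * R := by positivity
    rw [e, abs_neg, abs_of_pos (by positivity)]
    nlinarith [mul_le_mul_of_nonneg_left hq hp.le, mul_pos hp hr]
  obtain ⟨M, hM⟩ := eventually_atTop.1 (h3.eventually_lt_const hlt)
  refine ⟨M + 1, by omega, ?_⟩
  intro n hn
  obtain ⟨m, rfl⟩ : ∃ m, n = m + 1 := ⟨n - 1, by omega⟩
  have hm := (hM m (by omega)).le
  rw [Y_ratio κp R R' hκp hR hR', Y_ratio κs R R' hκs hR hR', ← mul_sub, abs_mul,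
    abs_of_nonneg (by positivity : (0:ℝ) ≤ (R' / R) ^ (((m + 1 : ℕ) : ℝ) - 1 / 2)), mul_comm]
  apply mul_le_mul_of_nonneg_right _ (by positivity)
  have hpos : (0:ℝ) < 2 * (m:ℝ) + 1 := by positivity
  rw [← mul_sub, abs_mul, abs_of_pos hpos, sub_sub_sub_cancel_right] at hm
  have e : 7 / 3 * (κs * (κs - κp) / (((m + 1 : ℕ) : ℝ) - 1 / 2)) * R * (R - R')
      = (14/3) * (κs * (κs - κp)) * R * (R - R') / (2 * (m:ℝ) + 1) := by
    rw [show ((m + 1 : ℕ) : ℝ) - 1 / 2 = (2 * (m:ℝ) + 1) / 2 by push_cast; ring]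
    field_simp
    ring
  rw [e, le_div_iff₀ hpos, mul_comm]
  exact hm
end

section
/- Let 0 < κ_p < κ_s and 0 < R' < R. There exists an integer N such that for every integer n ≥ N and for j = 1, 2, the spherical Hankel functions of the first and second kind satisfy |h^{(j)}_n(κ_p R)/h^{(j)}_n(κ_p R') − h^{(j)}_n(κ_s R)/h^{(j)}_n(κ_s R')| ≤ (14/3)·(κ_s(κ_s − κ_p)/n)·R·(R − R')·(R'/R)^{n+1}. -/
/-- Normalised Hankel functions. -/
noncomputable def wsph : ℕ → ℝ → ℂ
  | 0, z => Complex.exp (Complex.I * z)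
  | 1, z => Complex.exp (Complex.I * z) * (1 - Complex.I * z)
  | (n + 2), z => wsph (n + 1) z - (z : ℂ) ^ 2 * wsph n z / ((2 * (n : ℂ) + 1) * (2 * (n : ℂ) + 3))

/-- Odd double factorials. -/
noncomputable def dsph : ℕ → ℂ
  | 0 => 1
  | (n + 1) => (2 * (n : ℂ) + 1) * dsph n

lemma odd_ne (n : ℕ) : (2 * (n : ℂ) + 1) ≠ 0 := by
  exact_mod_cast Nat.succ_ne_zero (2 * n)

lemma odd_ne3 (n : ℕ) : (2 * (n : ℂ) + 3) ≠ 0 := by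
  exact_mod_cast Nat.succ_ne_zero (2 * n + 2)

lemma dsph_ne (n : ℕ) : dsph n ≠ 0 := by
  induction n with
  | zero => simp [dsph]
  | succ k ih => exact mul_ne_zero (odd_ne k) ih

lemma h1_eq (z : ℝ) (hz : z ≠ 0) (n : ℕ) :
    h1sph n z = -Complex.I * dsph n * wsph n z / (z : ℂ) ^ (n + 1) ∧
    h1sph (n + 1) z = -Complex.I * dsph (n + 1) * wsph (n + 1) z / (z : ℂ) ^ (n + 2) := by
  have hz' : (z : ℂ) ≠ 0 := by exact_mod_cast hz
  have hI : Complex.I ^ 2 = -1 := Complex.I_sq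
  induction n with
  | zero =>
    have he : Complex.exp (Complex.I * z) = Complex.cos z + Complex.sin z * Complex.I := by
      rw [mul_comm, Complex.exp_mul_I]
    constructor
    · simp only [h1sph, jsph, ysph, wsph, dsph, he]
      push_cast
      field_simp
      linear_combination (Complex.sin z) * hI
    · simp only [h1sph, jsph, ysph, wsph, dsph, he]
      push_cast
      field_simp
      ring_nf
      simp only [show Complex.I ^ 3 = -Complex.I by rw [pow_succ, hI]; ring, hI]
      ring
  | succ k ih =>
    refine ⟨ih.2, ?_⟩
    have h3 : h1sph (k + 1 + 1) z = ((2 * (k : ℂ) + 3) / z) * h1sph (k + 1) z - h1sph k z := by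
      simp only [h1sph, jsph, ysph]
      push_cast
      ring
    rw [h3, ih.1, ih.2]
    have h1 := odd_ne k
    have h2 := odd_ne3 k
    simp only [wsph, dsph]
    push_cast
    field_simp
    ring

lemma w_deriv (n : ℕ) : (∃ w' : ℝ → ℂ, ∀ z : ℝ, HasDerivAt (wsph n) (w' z) z ∧
      z * w' z = (2 * (n : ℂ) + 1) * (wsph n z - wsph (n + 1) z)) ∧
    ∀ z : ℝ, HasDerivAt (wsph (n + 1)) (z * wsph n z / (2 * (n : ℂ) + 1)) z := by
  have hI : Complex.I ^ 2 = -1 := Complex.I_sq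
  induction n with
  | zero =>
    have hid : ∀ z : ℝ, HasDerivAt (fun z : ℝ => Complex.I * (z : ℂ)) Complex.I z := fun z => by
      simpa using (Complex.ofRealCLM.hasDerivAt (x := z)).const_mul Complex.I
    have h0 : ∀ z : ℝ, HasDerivAt (fun z : ℝ => Complex.exp (Complex.I * (z : ℂ)))
      (Complex.exp (Complex.I * z) * Complex.I) z := fun z => (hid z).cexp
    refine ⟨⟨fun z => Complex.exp (Complex.I * z) * Complex.I, fun z => ⟨?_, ?_⟩⟩, fun z => ?_⟩
    · exact (h0 z).congr_of_eventuallyEq (Filter.Eventually.of_forall fun x => by simp [wsph])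
    · simp only [wsph]; push_cast; ring
    · have := (h0 z).mul ((hid z).const_sub 1)
      refine (this.congr_of_eventuallyEq
        (Filter.Eventually.of_forall fun x => by simp [wsph])).congr_deriv ?_
      simp only [wsph]
      push_cast
      linear_combination (-Complex.exp (Complex.I * z) * z) * hI
  | succ k ih =>
    obtain ⟨⟨w', hw'⟩, h1⟩ := ih
    have o1 := odd_ne k
    have o3 := odd_ne3 k
    refine ⟨⟨fun z => z * wsph k z / (2 * (k : ℂ) + 1), fun z => ⟨h1 z, ?_⟩⟩, fun z => ?_⟩
    · simp only [wsph]
      push_cast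
      field_simp
      ring
    · have hz : HasDerivAt (fun z : ℝ => (z : ℂ)) 1 z := by
        simpa using (hasDerivAt_id z).ofReal_comp
      have := (h1 z).sub (((hz.pow 2).mul (hw' z).1).div_const
        ((2 * (k : ℂ) + 1) * (2 * (k : ℂ) + 3)))
      refine (this.congr_of_eventuallyEq
        (Filter.Eventually.of_forall fun x => by simp [wsph])).congr_deriv ?_
      have e := (hw' z).2
      have o3' : (2 * ((k : ℂ) + 1) + 1) ≠ 0 := by
        convert o3 using 1; ring
      simp only [Pi.pow_apply]
      push_cast
      field_simp
      linear_combination (-(z : ℂ) * (2 * ((k : ℂ) + 1) + 1)) * e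

lemma w_zero (n : ℕ) : wsph n 0 = 1 ∧ wsph (n + 1) 0 = 1 := by
  induction n with
  | zero => simp [wsph]
  | succ k ih => exact ⟨ih.2, by simp [wsph, ih.2]⟩

lemma norm_odd (n : ℕ) : ‖(2 * (n : ℂ) + 1)‖ = 2 * (n : ℝ) + 1 := by
  have : (2 * (n : ℂ) + 1) = ((2 * (n : ℝ) + 1 : ℝ) : ℂ) := by push_cast; rfl
  rw [this, Complex.norm_real, Real.norm_of_nonneg (by positivity)]

lemma w_step (Z : ℝ) (n : ℕ) (C : ℝ) (hC : ∀ z ∈ Set.Icc 0 Z, ‖wsph n z‖ ≤ C) :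
    ∀ z ∈ Set.Icc 0 Z, ‖wsph (n + 1) z - 1‖ ≤ Z ^ 2 * C / (2 * n + 1) := by
  intro z hz
  have hZ : 0 ≤ Z := hz.1.trans hz.2
  have hC0 : 0 ≤ C := (norm_nonneg _).trans (hC z hz)
  have := (convex_Icc (0 : ℝ) Z).norm_image_sub_le_of_norm_hasDerivWithin_le
    (f := wsph (n + 1)) (C := Z * C / (2 * n + 1))
    (fun x _ => ((w_deriv n).2 x).hasDerivWithinAt) (fun x hx => by
      rw [norm_div, norm_mul, norm_odd, Complex.norm_real, Real.norm_of_nonneg hx.1]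
      have := hC x hx
      have := hx.2
      gcongr) (Set.left_mem_Icc.2 hZ) hz
  rw [(w_zero n).2] at this
  refine this.trans ?_
  rw [sub_zero, Real.norm_of_nonneg hz.1]
  calc Z * C / (2 * n + 1) * z ≤ Z * C / (2 * n + 1) * Z := by
        have := hz.2
        gcongr
    _ = _ := by ring

lemma w_step2 (Z : ℝ) (n : ℕ) (C : ℝ) (hC : ∀ z ∈ Set.Icc 0 Z, ‖wsph n z - 1‖ ≤ C) :
    ∀ z ∈ Set.Icc 0 Z, ‖wsph (n + 1) z - 1 - z ^ 2 / (2 * (2 * n + 1))‖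
      ≤ Z ^ 2 * C / (2 * n + 1) := by
  intro z hz
  have hZ : 0 ≤ Z := hz.1.trans hz.2
  have hC0 : 0 ≤ C := (norm_nonneg _).trans (hC z hz)
  have o1 := odd_ne n
  have := (convex_Icc (0 : ℝ) Z).norm_image_sub_le_of_norm_hasDerivWithin_le
    (f := fun z : ℝ => wsph (n + 1) z - (z : ℂ) ^ 2 / (2 * (2 * n + 1)))
    (f' := fun z : ℝ => z * (wsph n z - 1) / (2 * n + 1))
    (C := Z * C / (2 * n + 1))
    (fun x _ => by
      have hx : HasDerivAt (fun z : ℝ => (z : ℂ)) 1 x := by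
        simpa using (hasDerivAt_id x).ofReal_comp
      refine HasDerivAt.hasDerivWithinAt ?_
      refine (((w_deriv n).2 x).sub ((hx.pow 2).div_const _)).congr_deriv ?_
      field_simp
      push_cast
      ring) (fun x hx => by
      rw [norm_div, norm_mul, norm_odd, Complex.norm_real, Real.norm_of_nonneg hx.1]
      have := hC x hx
      have := hx.2
      gcongr) (Set.left_mem_Icc.2 hZ) hz
  simp only [(w_zero n).2] at this
  rw [show wsph (n + 1) z - 1 - (z : ℂ) ^ 2 / (2 * (2 * n + 1)) =
    wsph (n + 1) z - (z : ℂ) ^ 2 / (2 * (2 * n + 1)) -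
      (1 - ((0 : ℝ) : ℂ) ^ 2 / (2 * (2 * n + 1))) by push_cast; ring]
  refine this.trans ?_
  rw [sub_zero, Real.norm_of_nonneg hz.1]
  calc Z * C / (2 * n + 1) * z ≤ Z * C / (2 * n + 1) * Z := by
        have := hz.2
        gcongr
    _ = _ := by ring

lemma w_bdd (Z : ℝ) : ∃ C : ℝ, 0 ≤ C ∧ ∃ N : ℕ, ∀ n ≥ N, ∀ z ∈ Set.Icc 0 Z, ‖wsph n z‖ ≤ C := by
  have each : ∀ n, ∃ C : ℝ, ∀ z ∈ Set.Icc 0 Z, ‖wsph n z‖ ≤ C := by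
    intro n
    induction n with
    | zero =>
      refine ⟨1, fun z _ => ?_⟩
      simp only [wsph]
      rw [mul_comm, Complex.norm_exp_ofReal_mul_I]
    | succ k ih =>
      obtain ⟨C, hC⟩ := ih
      refine ⟨Z ^ 2 * C / (2 * k + 1) + 1, fun z hz => ?_⟩
      have h := w_step Z k C hC z hz
      have := norm_le_norm_sub_add (wsph (k + 1) z) 1
      rw [norm_one] at this
      linarith
  obtain ⟨N, hN⟩ := exists_nat_ge (Z ^ 2)
  obtain ⟨C, hC⟩ := each N
  refine ⟨max C 2, by positivity, N, fun n hn => ?_⟩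
  induction n, hn using Nat.le_induction with
  | base => exact fun z hz => (hC z hz).trans (le_max_left _ _)
  | succ k hk ih =>
    intro z hz
    have h := w_step Z k _ ih z hz
    have := norm_le_norm_sub_add (wsph (k + 1) z) 1
    rw [norm_one] at this
    have h2 : (2 : ℝ) ≤ max C 2 := le_max_right _ _
    have hk' : (N : ℝ) ≤ k := by exact_mod_cast hk
    have h3 : Z ^ 2 * max C 2 / (2 * k + 1) ≤ max C 2 / 2 := by
      rw [div_le_div_iff₀ (by positivity) (by norm_num)]
      nlinarith
    linarith

open Filter Topology in
lemma w_asymp (z : ℝ) (hz : 0 ≤ z) :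
    Tendsto (fun n : ℕ => (n : ℂ) * (wsph n z - 1)) atTop (𝓝 ((z : ℂ) ^ 2 / 4)) := by
  obtain ⟨C, hC0, N, hC⟩ := w_bdd z
  have key : ∀ n ≥ N, ‖wsph (n + 2) z - 1 - z ^ 2 / (2 * (2 * ((n + 1 : ℕ) : ℂ) + 1))‖
      ≤ z ^ 4 * C / ((2 * n + 1) * (2 * n + 3)) := fun n hn => by
    refine (w_step2 z (n + 1) _ (w_step z n C (hC n hn)) z ⟨hz, le_rfl⟩).trans (le_of_eq ?_)
    push_cast
    field_simp
    ring
  rw [← tendsto_add_atTop_iff_nat 2]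
  have t1 : Tendsto (fun n : ℕ => ((n + 2 : ℕ) : ℂ) *
      (wsph (n + 2) z - 1 - z ^ 2 / (2 * (2 * ((n + 1 : ℕ) : ℂ) + 1)))) atTop (𝓝 0) := by
    have t : Tendsto (fun n : ℕ => z ^ 4 * C * (2 * (1 / ((n : ℝ) + 1)))) atTop (𝓝 0) := by
      simpa using ((tendsto_one_div_add_atTop_nhds_zero_nat (𝕜 := ℝ)).const_mul 2).const_mul
        (z ^ 4 * C)
    refine squeeze_zero_norm' ?_ t
    filter_upwards [eventually_ge_atTop N] with n hn
    rw [norm_mul, Complex.norm_natCast]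
    refine (mul_le_mul_of_nonneg_left (key n hn) (by positivity)).trans ?_
    have : ((n + 2 : ℕ) : ℝ) * (1 / ((2 * n + 1) * (2 * n + 3))) ≤ 2 * (1 / ((n : ℝ) + 1)) := by
      push_cast
      rw [mul_one_div, mul_one_div, div_le_div_iff₀ (by positivity) (by positivity)]
      nlinarith [(Nat.cast_nonneg n : (0 : ℝ) ≤ n)]
    calc _ = z ^ 4 * C * (((n + 2 : ℕ) : ℝ) * (1 / ((2 * n + 1) * (2 * n + 3)))) := by ring
      _ ≤ _ := by gcongr
  have t2 : Tendsto (fun n : ℕ => ((n + 2 : ℕ) : ℂ) *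
      (z ^ 2 / (2 * (2 * ((n + 1 : ℕ) : ℂ) + 1)))) atTop (𝓝 ((z : ℂ) ^ 2 / 4)) := by
    have a : Tendsto (fun n : ℕ => (1 : ℂ) / (2 * (n : ℂ) + 1)) atTop (𝓝 0) := by
      have t : Tendsto (fun n : ℕ => (1 / ((n : ℝ) + 1))) atTop (𝓝 0) :=
        tendsto_one_div_add_atTop_nhds_zero_nat
      refine squeeze_zero_norm (fun n => ?_) t
      rw [norm_div, norm_odd, norm_one]
      gcongr
      linarith [(Nat.cast_nonneg n : (0 : ℝ) ≤ n)]
    have b := (((tendsto_add_atTop_iff_nat 1).2 a).const_mul ((z : ℂ) ^ 2 / 4)).const_add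
      ((z : ℂ) ^ 2 / 4)
    simp only [mul_zero, add_zero] at b
    refine b.congr fun n => ?_
    have := odd_ne (n + 1)
    field_simp
    push_cast
    ring
  have := t1.add t2
  rw [zero_add] at this
  refine this.congr fun n => ?_
  ring

open Filter Topology in
lemma w_one (z : ℝ) (hz : 0 ≤ z) : Tendsto (fun n : ℕ => wsph n z) atTop (𝓝 1) := by
  have h := (w_asymp z hz).mul (tendsto_inv_atTop_nhds_zero_nat (𝕜 := ℂ))
  rw [mul_zero] at h
  have h2 := h.add_const 1
  rw [zero_add] at h2
  refine h2.congr' ?_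
  filter_upwards [eventually_gt_atTop 0] with n hn
  have : (n : ℂ) ≠ 0 := by exact_mod_cast hn.ne'
  field_simp
  ring

open Filter Topology in
lemma w_ratio (x y : ℝ) (hx : 0 ≤ x) (hy : 0 ≤ y) :
    Tendsto (fun n : ℕ => (n : ℂ) * (wsph n x / wsph n y - 1)) atTop
      (𝓝 ((x : ℂ) ^ 2 / 4 - (y : ℂ) ^ 2 / 4)) := by
  have h := ((w_asymp x hx).sub (w_asymp y hy)).div (w_one y hy) one_ne_zero
  rw [div_one] at h
  refine h.congr' ?_
  filter_upwards [(w_one y hy).eventually_ne one_ne_zero] with n hn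
  simp only [Pi.div_apply]
  field_simp
  ring

lemma h1_ratio (κ R R' : ℝ) (hκ : 0 < κ) (hR' : 0 < R') (hR : 0 < R) (n : ℕ) :
    h1sph n (κ * R) / h1sph n (κ * R') =
      ((R' / R : ℝ) : ℂ) ^ (n + 1) * (wsph n (κ * R) / wsph n (κ * R')) := by
  rw [(h1_eq (κ * R) (by positivity) n).1, (h1_eq (κ * R') (by positivity) n).1]
  have h1 : (κ : ℂ) ≠ 0 := by exact_mod_cast hκ.ne'
  have h2 : (R : ℂ) ≠ 0 := by exact_mod_cast hR.ne'
  have h3 : (R' : ℂ) ≠ 0 := by exact_mod_cast hR'.ne'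
  have h4 := dsph_ne n
  have h5 := Complex.I_ne_zero
  by_cases h6 : wsph n (κ * R') = 0
  · simp [h6]
  push_cast
  rw [mul_pow, mul_pow, div_pow]
  field_simp

lemma h2_conj (n : ℕ) (z : ℝ) : h2sph n z = (starRingEnd ℂ) (h1sph n z) := by
  simp [h2sph, h1sph, sub_eq_add_neg]

/-- Difference of ratios of spherical Hankel functions (of both kinds) at the
compressional and shear wavenumbers decays like `(R'/R)^{n+1}`. -/
theorem hankel_ratio_difference_bound (R R' κp κs : ℝ)
    (hκp : 0 < κp) (hκ : κp < κs) (hR' : 0 < R') (hRR : R' < R) :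
    ∃ N : ℕ, ∀ n : ℕ, N ≤ n →
      ‖(h1sph n (κp * R) / h1sph n (κp * R')
          - h1sph n (κs * R) / h1sph n (κs * R'))‖
        ≤ (14/3) * (κs * (κs - κp) / (n : ℝ)) * R * (R - R') * (R' / R) ^ (n + 1) ∧
      ‖(h2sph n (κp * R) / h2sph n (κp * R')
          - h2sph n (κs * R) / h2sph n (κs * R'))‖
        ≤ (14/3) * (κs * (κs - κp) / (n : ℝ)) * R * (R - R') * (R' / R) ^ (n + 1) := by
  have hR : 0 < R := hR'.trans hRR
  have hκs : 0 < κs := hκp.trans hκ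
  have t := ((w_ratio (κp * R) (κp * R') (by positivity) (by positivity)).sub
    (w_ratio (κs * R) (κs * R') (by positivity) (by positivity))).norm
  have hl : ‖(((κp * R : ℝ) : ℂ) ^ 2 / 4 - ((κp * R' : ℝ) : ℂ) ^ 2 / 4) -
      (((κs * R : ℝ) : ℂ) ^ 2 / 4 - ((κs * R' : ℝ) : ℂ) ^ 2 / 4)‖
      < (14/3) * (κs * (κs - κp)) * R * (R - R') := by
    have e : (((κp * R : ℝ) : ℂ) ^ 2 / 4 - ((κp * R' : ℝ) : ℂ) ^ 2 / 4) -
      (((κs * R : ℝ) : ℂ) ^ 2 / 4 - ((κs * R' : ℝ) : ℂ) ^ 2 / 4) =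
      ((-((κs - κp) * (R - R') * ((κs + κp) * (R + R') / 4)) : ℝ) : ℂ) := by
      push_cast; ring
    have p1 : 0 < κs - κp := sub_pos.2 hκ
    have p2 : 0 < R - R' := sub_pos.2 hRR
    rw [e, Complex.norm_real, norm_neg, Real.norm_of_nonneg (by positivity)]
    have h1 : (κs + κp) * (R + R') ≤ (2 * κs) * (2 * R) := by
      gcongr <;> linarith
    have h2 : 0 < κs * R := by positivity
    calc (κs - κp) * (R - R') * ((κs + κp) * (R + R') / 4)
        < (κs - κp) * (R - R') * ((14/3) * (κs * R)) := by
          gcongr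
          linarith
      _ = _ := by ring
  obtain ⟨N, hN⟩ := Filter.eventually_atTop.1 (t.eventually_lt_const hl)
  refine ⟨N + 1, fun n hn => ?_⟩
  have hb := hN n (by omega)
  have hn0 : (0 : ℝ) < n := by exact_mod_cast (by omega : 0 < n)
  have main : ‖(h1sph n (κp * R) / h1sph n (κp * R')
          - h1sph n (κs * R) / h1sph n (κs * R'))‖
        ≤ (14/3) * (κs * (κs - κp) / (n : ℝ)) * R * (R - R') * (R' / R) ^ (n + 1) := by
    rw [h1_ratio κp R R' hκp hR' hR, h1_ratio κs R R' hκs hR' hR, ← mul_sub, norm_mul, norm_pow,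
      Complex.norm_real, Real.norm_of_nonneg (by positivity), mul_comm]
    refine mul_le_mul_of_nonneg_right ?_ (by positivity)
    rw [← mul_sub, norm_mul, Complex.norm_natCast, sub_sub_sub_cancel_right] at hb
    have e : (14/3) * (κs * (κs - κp) / (n : ℝ)) * R * (R - R') =
      (14/3) * (κs * (κs - κp)) * R * (R - R') / n := by ring
    rw [e, le_div_iff₀ hn0, mul_comm]
    exact hb.le
  refine ⟨main, ?_⟩
  rw [h2_conj, h2_conj, h2_conj, h2_conj, ← map_div₀, ← map_div₀, ← map_sub, Complex.norm_conj]
  exact main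
end

section
/- Fix κ_p, κ_s, R > 0. For n ∈ ℕ define z_n^{(1)}(t) = t·(h^{(1)}_n)'(t)/h^{(1)}_n(t) for t > 0 and Λ_n(R) = z_n^{(1)}(κ_p R)·(1 + z_n^{(1)}(κ_s R)) − n(n+1). Then there exist a constant C > 0 and an integer N such that for all n ≥ N, |Λ_n(R) + (κ_p² + κ_s²)·R²/2| ≤ C/n. -/
/-- `z_n^{(1)}(t) = t (h^{(1)}_n)'(t) / h^{(1)}_n(t)`. -/
noncomputable def zn1 (n : ℕ) (t : ℝ) : ℂ := (t : ℂ) * deriv (h1sph n) t / h1sph n t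

theorem aux_deriv (f : ℕ → ℝ → ℝ)
    (hrec : ∀ n z, f (n + 2) z = ((2 * (n : ℝ) + 3) / z) * f (n + 1) z - f n z)
    (h0 : ∀ t : ℝ, 0 < t → HasDerivAt (f 0) (-f 1 t) t)
    (h1 : ∀ t : ℝ, 0 < t → HasDerivAt (f 1) (f 0 t - 2 / t * f 1 t) t) (n : ℕ) :
    ∀ t : ℝ, 0 < t → HasDerivAt (f n) (n / t * f n t - f (n + 1) t) t ∧
      HasDerivAt (f (n + 1)) (f n t - (n + 2) / t * f (n + 1) t) t := by
  induction n with
  | zero =>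
    intro t ht
    refine ⟨?_, ?_⟩
    · have := h0 t ht
      simpa using this
    · have := h1 t ht
      simpa using this
  | succ n ih =>
    intro t ht
    obtain ⟨ha, hb⟩ := ih t ht
    have hne : t ≠ 0 := ht.ne'
    refine ⟨?_, ?_⟩
    · convert hb using 1
      rw [hrec]
      push_cast
      field_simp
      ring
    · have hfun : f (n + 1 + 1) = fun z => ((2 * (n : ℝ) + 3) * z⁻¹) * f (n + 1) z - f n z := by
        funext z
        rw [hrec, div_eq_mul_inv]
      have hd := ((((hasDerivAt_inv hne).const_mul (2 * (n : ℝ) + 3)).mul hb).sub ha)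
      rw [hfun]
      refine hd.congr_deriv ?_
      push_cast
      field_simp
      ring

theorem aux_j (n : ℕ) (t : ℝ) (ht : 0 < t) :
    HasDerivAt (jsph (n + 1)) (jsph n t - (n + 2) / t * jsph (n + 1) t) t := by
  refine (aux_deriv jsph (fun n z => by rw [jsph]) ?_ ?_ n t ht).2
  · intro t ht
    have hne : t ≠ 0 := ht.ne'
    have e : jsph 0 = fun z => Real.sin z / z := by funext z; rw [jsph]
    rw [e]
    refine ((Real.hasDerivAt_sin t).div (hasDerivAt_id t) hne).congr_deriv ?_
    simp only [jsph, id]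
    field_simp
    ring
  · intro t ht
    have hne : t ≠ 0 := ht.ne'
    have e : jsph 1 = fun z => Real.sin z / z ^ 2 - Real.cos z / z := by funext z; rw [jsph]
    rw [e]
    refine (((Real.hasDerivAt_sin t).div (hasDerivAt_pow 2 t) (pow_ne_zero 2 hne)).sub
      ((Real.hasDerivAt_cos t).div (hasDerivAt_id t) hne)).congr_deriv ?_
    simp only [jsph, id]
    field_simp
    ring

theorem aux_y (n : ℕ) (t : ℝ) (ht : 0 < t) :
    HasDerivAt (ysph (n + 1)) (ysph n t - (n + 2) / t * ysph (n + 1) t) t := by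
  refine (aux_deriv ysph (fun n z => by rw [ysph]) ?_ ?_ n t ht).2
  · intro t ht
    have hne : t ≠ 0 := ht.ne'
    have e : ysph 0 = fun z => -Real.cos z / z := by funext z; rw [ysph]
    rw [e]
    refine ((Real.hasDerivAt_cos t).neg.div (hasDerivAt_id t) hne).congr_deriv ?_
    simp only [ysph, id, Pi.neg_apply]
    field_simp
    ring
  · intro t ht
    have hne : t ≠ 0 := ht.ne'
    have e : ysph 1 = fun z => -Real.cos z / z ^ 2 - Real.sin z / z := by funext z; rw [ysph]
    rw [e]
    refine (((Real.hasDerivAt_cos t).neg.div (hasDerivAt_pow 2 t) (pow_ne_zero 2 hne)).sub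
      ((Real.hasDerivAt_sin t).div (hasDerivAt_id t) hne)).congr_deriv ?_
    simp only [ysph, id, Pi.neg_apply]
    field_simp
    ring

theorem aux_h (n : ℕ) (t : ℝ) (ht : 0 < t) :
    HasDerivAt (h1sph (n + 1)) (h1sph n t - (n + 2) / t * h1sph (n + 1) t) t := by
  have hd := ((aux_j n t ht).ofReal_comp).add (((aux_y n t ht).ofReal_comp).const_mul Complex.I)
  refine HasDerivAt.congr_deriv (f := h1sph (n + 1)) hd ?_
  simp only [h1sph]
  push_cast
  ring

theorem aux_cas (t : ℝ) (ht : 0 < t) (n : ℕ) :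
    jsph (n + 1) t * ysph n t - jsph n t * ysph (n + 1) t = 1 / t ^ 2 := by
  have hne : t ≠ 0 := ht.ne'
  induction n with
  | zero =>
    simp only [jsph, ysph]
    field_simp
    linear_combination t * Real.sin_sq_add_cos_sq t
  | succ n ih =>
    rw [jsph, ysph, ← ih]
    ring

theorem aux_hrec (n : ℕ) (t : ℝ) (ht : 0 < t) :
    t * h1sph (n + 2) t = (2 * n + 3) * h1sph (n + 1) t - t * h1sph n t := by
  have hne : (t : ℂ) ≠ 0 := by exact_mod_cast ht.ne'
  simp only [h1sph, jsph, ysph]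
  push_cast
  field_simp
  ring

theorem aux_casn (t : ℝ) (ht : 0 < t) (n : ℕ) :
    1 / t ^ 2 ≤ 2 * (‖h1sph (n + 1) t‖ * ‖h1sph n t‖) := by
  have hj : ∀ n, |jsph n t| ≤ ‖h1sph n t‖ := fun n => by
    have := Complex.abs_re_le_norm (h1sph n t)
    simpa [h1sph] using this
  have hy : ∀ n, |ysph n t| ≤ ‖h1sph n t‖ := fun n => by
    have := Complex.abs_im_le_norm (h1sph n t)
    simpa [h1sph] using this
  have h1 : |jsph (n + 1) t * ysph n t| ≤ ‖h1sph (n + 1) t‖ * ‖h1sph n t‖ := by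
    rw [abs_mul]
    exact mul_le_mul (hj _) (hy _) (abs_nonneg _) (norm_nonneg _)
  have h2 : |jsph n t * ysph (n + 1) t| ≤ ‖h1sph n t‖ * ‖h1sph (n + 1) t‖ := by
    rw [abs_mul]
    exact mul_le_mul (hj _) (hy _) (abs_nonneg _) (norm_nonneg _)
  rw [← aux_cas t ht n]
  have := le_abs_self (jsph (n + 1) t * ysph n t)
  have := neg_abs_le (jsph n t * ysph (n + 1) t)
  linarith

theorem aux_ne (t : ℝ) (ht : 0 < t) (n : ℕ) : h1sph n t ≠ 0 := by
  intro h
  have := aux_casn t ht n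
  rw [h] at this
  have h2 : 0 < 1 / t ^ 2 := by positivity
  rw [norm_zero, mul_zero, mul_zero] at this
  exact absurd this (not_le.mpr h2)

theorem aux_step (t : ℝ) (ht : 0 < t) (n : ℕ) :
    (2 * n + 3) * ‖h1sph (n + 1) t‖ ≤ t * ‖h1sph (n + 2) t‖ + t * ‖h1sph n t‖ := by
  have h := aux_hrec n t ht
  have h2 : ((2 * n + 3 : ℝ) : ℂ) * h1sph (n + 1) t = t * h1sph (n + 2) t + t * h1sph n t := by
    rw [h]; push_cast; ring
  have h3 := congrArg norm h2
  rw [norm_mul, Complex.norm_real, Real.norm_of_nonneg (by positivity)] at h3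
  rw [h3]
  refine (norm_add_le _ _).trans ?_
  rw [norm_mul, norm_mul, Complex.norm_real, Real.norm_of_nonneg ht.le]

theorem aux_mono (t : ℝ) (ht : 0 < t) :
    ∃ N : ℕ, ∀ n : ℕ, N ≤ n → ‖h1sph n t‖ ≤ ‖h1sph (n + 1) t‖ := by
  obtain ⟨M, hM⟩ := exists_nat_ge t
  by_cases hex : ∃ N, M ≤ N ∧ ‖h1sph N t‖ ≤ ‖h1sph (N + 1) t‖
  · obtain ⟨N, hN, hle⟩ := hex
    refine ⟨N, fun n hn => ?_⟩
    induction n, hn using Nat.le_induction with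
    | base => exact hle
    | succ n hn ih =>
      have hs := aux_step t ht n
      have hnt : t ≤ n := hM.trans (by exact_mod_cast hN.trans hn)
      have h1 : t * ‖h1sph n t‖ ≤ t * ‖h1sph (n + 1) t‖ := mul_le_mul_of_nonneg_left ih ht.le
      have h2 : (2 * t) * ‖h1sph (n + 1) t‖ ≤ (2 * n + 3) * ‖h1sph (n + 1) t‖ :=
        mul_le_mul_of_nonneg_right (by linarith) (norm_nonneg _)
      have : t * ‖h1sph (n + 1) t‖ ≤ t * ‖h1sph (n + 1 + 1) t‖ := by linarith
      exact le_of_mul_le_mul_left this ht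
  · exfalso
    push Not at hex
    have hb : ∀ n, M ≤ n → ‖h1sph n t‖ ≤ ‖h1sph M t‖ := by
      intro n hn
      induction n, hn using Nat.le_induction with
      | base => exact le_rfl
      | succ n hn ih => exact (hex n hn).le.trans ih
    set B := ‖h1sph M t‖ with hB
    have hB0 : 0 ≤ B := norm_nonneg _
    obtain ⟨K, hK⟩ := exists_nat_ge (4 * t * B * B * t ^ 2)
    have hs := aux_step t ht (M + K)
    have hc := aux_casn t ht (M + K)
    have b0 := hb (M + K) (by omega)
    have b2 := hb (M + K + 2) (by omega)
    have hx : (0:ℝ) ≤ ‖h1sph (M + K + 1) t‖ := norm_nonneg _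
    have hy : (0:ℝ) ≤ ‖h1sph (M + K) t‖ := norm_nonneg _
    set x := ‖h1sph (M + K + 1) t‖
    set y := ‖h1sph (M + K) t‖
    have e1 : (2 * ((M + K : ℕ) : ℝ) + 3) * x ≤ 2 * t * B := by
      have := mul_le_mul_of_nonneg_left b0 ht.le
      have := mul_le_mul_of_nonneg_left b2 ht.le
      linarith
    have e2 : 1 / t ^ 2 ≤ 2 * (x * B) :=
      hc.trans (by have := mul_le_mul_of_nonneg_left b0 hx; linarith)
    have e3 : 1 ≤ 2 * (x * B) * t ^ 2 := by
      rwa [div_le_iff₀ (by positivity)] at e2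
    have hL : (0:ℝ) < 2 * ((M + K : ℕ) : ℝ) + 3 := by positivity
    have e4 : (2 * ((M + K : ℕ) : ℝ) + 3) ≤ 4 * t * B * B * t ^ 2 := by
      calc (2 * ((M + K : ℕ) : ℝ) + 3) = (2 * ((M + K : ℕ) : ℝ) + 3) * 1 := by ring
        _ ≤ (2 * ((M + K : ℕ) : ℝ) + 3) * (2 * (x * B) * t ^ 2) :=
          mul_le_mul_of_nonneg_left e3 hL.le
        _ = ((2 * ((M + K : ℕ) : ℝ) + 3) * x) * (2 * B * t ^ 2) := by ring
        _ ≤ (2 * t * B) * (2 * B * t ^ 2) := mul_le_mul_of_nonneg_right e1 (by positivity)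
        _ = _ := by ring
    push_cast at e4
    have : (0:ℝ) ≤ M := by positivity
    have : (0:ℝ) ≤ K := by positivity
    linarith

theorem aux_zn (t : ℝ) (ht : 0 < t) :
    ∃ C : ℝ, 0 < C ∧ ∃ N : ℕ, ∀ n : ℕ, N ≤ n → 1 ≤ n ∧ ∃ r : ℂ,
      zn1 n t = -((n : ℂ) + 1) + r ∧ ‖r‖ ≤ C / n ∧ ‖n * r - (t : ℂ) ^ 2 / 2‖ ≤ C / n := by
  obtain ⟨N, hN⟩ := aux_mono t ht
  obtain ⟨M, hM⟩ := exists_nat_ge t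
  refine ⟨t ^ 2 * (1 + t) + t ^ 2, by positivity, N + M + 2, fun n hn => ⟨by omega, ?_⟩⟩
  obtain ⟨m, rfl⟩ : ∃ m, n = m + 2 := ⟨n - 2, by omega⟩
  have hR : ∀ k, N ≤ k → ‖(t : ℂ) * h1sph k t / h1sph (k + 1) t‖ ≤ t := by
    intro k hk
    have hp : 0 < ‖h1sph (k + 1) t‖ := norm_pos_iff.mpr (aux_ne t ht _)
    rw [norm_div, norm_mul, Complex.norm_real, Real.norm_of_nonneg ht.le, div_le_iff₀ hp]
    exact mul_le_mul_of_nonneg_left (hN k hk) ht.le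
  have hq := hR m (by omega)
  have hrq : (2 * m + 3) * ((t : ℂ) * h1sph (m + 1) t / h1sph (m + 2) t) = (t : ℂ) ^ 2 +
      ((t : ℂ) * h1sph m t / h1sph (m + 1) t) * ((t : ℂ) * h1sph (m + 1) t / h1sph (m + 2) t) := by
    have n1 := aux_ne t ht (m + 1)
    have n2 := aux_ne t ht (m + 2)
    have := aux_hrec m t ht
    field_simp
    linear_combination -(t : ℂ) * this
  have hz : zn1 (m + 2) t = -(((m + 2 : ℕ) : ℂ) + 1) +
      (t : ℂ) * h1sph (m + 1) t / h1sph (m + 2) t := by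
    have n2 := aux_ne t ht (m + 2)
    have n3 : (t : ℂ) ≠ 0 := by exact_mod_cast ht.ne'
    rw [zn1, (aux_h (m + 1) t ht).deriv]
    push_cast
    field_simp
    ring
  generalize (t : ℂ) * h1sph (m + 1) t / h1sph (m + 2) t = r at *
  generalize (t : ℂ) * h1sph m t / h1sph (m + 1) t = q at *
  have hmt : t ≤ m := hM.trans (by exact_mod_cast (by omega : M ≤ m))
  have hm0 : (0 : ℝ) < ((m + 2 : ℕ) : ℝ) := by positivity
  have hr : ‖r‖ ≤ t ^ 2 / ((m + 2 : ℕ) : ℝ) := by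
    have h3 := congrArg norm hrq
    have e : (2 * m + 3 : ℂ) = ((2 * m + 3 : ℝ) : ℂ) := by push_cast; ring
    rw [norm_mul, e, Complex.norm_real, Real.norm_of_nonneg (by positivity)] at h3
    have h4 : ‖(t : ℂ) ^ 2 + q * r‖ ≤ t ^ 2 + t * ‖r‖ := by
      refine (norm_add_le _ _).trans ?_
      rw [norm_pow, norm_mul, Complex.norm_real, Real.norm_of_nonneg ht.le]
      have := mul_le_mul_of_nonneg_right hq (norm_nonneg r)
      linarith
    rw [le_div_iff₀ hm0]
    push_cast
    have h5 := mul_le_mul_of_nonneg_right hmt (norm_nonneg r)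
    have := norm_nonneg r
    nlinarith
  refine ⟨r, hz, hr.trans ?_, ?_⟩
  · gcongr
    nlinarith [pow_pos ht 2, pow_pos ht 3]
  · have e : ((m + 2 : ℕ) : ℂ) * r - (t : ℂ) ^ 2 / 2 = (r + q * r) / 2 := by
      push_cast
      linear_combination hrq / 2
    rw [e, norm_div]
    have h4 : ‖r + q * r‖ ≤ (1 + t) * ‖r‖ := by
      refine (norm_add_le _ _).trans ?_
      rw [norm_mul]
      have := mul_le_mul_of_nonneg_right hq (norm_nonneg r)
      linarith
    have h5 : (1 + t) * ‖r‖ ≤ (1 + t) * (t ^ 2 / ((m + 2 : ℕ) : ℝ)) :=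
      mul_le_mul_of_nonneg_left hr (by positivity)
    have h6 : (0:ℝ) ≤ t ^ 2 / ((m + 2 : ℕ) : ℝ) := by positivity
    have h7 : (t ^ 2 * (1 + t) + t ^ 2) / ((m + 2 : ℕ) : ℝ) =
      (1 + t) * (t ^ 2 / ((m + 2 : ℕ) : ℝ)) + t ^ 2 / ((m + 2 : ℕ) : ℝ) := by ring
    rw [h7]
    have h8 := norm_nonneg (r + q * r)
    simp only [Complex.norm_ofNat]
    linarith

/-- Asymptotics of `Λ_n(R) = z_n^{(1)}(κ_p R)(1 + z_n^{(1)}(κ_s R)) - n(n+1)`: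
`Λ_n(R) = -(κ_p² + κ_s²) R²/2 + O(1/n)`. -/
theorem Lambda_n_asymptotic (κp κs R : ℝ) (hκp : 0 < κp) (hκs : 0 < κs) (hR : 0 < R) :
    ∃ C : ℝ, 0 < C ∧ ∃ N : ℕ, ∀ n : ℕ, N ≤ n →
      norm (zn1 n (κp * R) * (1 + zn1 n (κs * R)) - ((n : ℂ) * ((n : ℂ) + 1))
          + (((κp ^ 2 + κs ^ 2) * R ^ 2 / 2 : ℝ) : ℂ))
        ≤ C / (n : ℝ) := by
  obtain ⟨C, hC, N, h⟩ := aux_zn (κp * R) (by positivity)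
  obtain ⟨D, hD, K, g⟩ := aux_zn (κs * R) (by positivity)
  refine ⟨D + C + D + C * D, by positivity, N + K, fun n hn => ?_⟩
  obtain ⟨h1, a, ha, ha1, ha2⟩ := h n (by omega)
  obtain ⟨-, b, hb, hb1, hb2⟩ := g n (by omega)
  have hn1 : (1 : ℝ) ≤ n := by exact_mod_cast h1
  rw [ha, hb]
  have e : (-((n : ℂ) + 1) + a) * (1 + (-((n : ℂ) + 1) + b)) - ((n : ℂ) * ((n : ℂ) + 1))
          + (((κp ^ 2 + κs ^ 2) * R ^ 2 / 2 : ℝ) : ℂ) =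
      -(n * b - ((κs * R : ℝ) : ℂ) ^ 2 / 2) - (n * a - ((κp * R : ℝ) : ℂ) ^ 2 / 2) - b + a * b := by
    push_cast
    ring
  rw [e]
  have hab : ‖a * b‖ ≤ C * D / n := by
    rw [norm_mul]
    have hb3 : ‖b‖ ≤ D := hb1.trans (div_le_self hD.le hn1)
    calc ‖a‖ * ‖b‖ ≤ C / n * D := mul_le_mul ha1 hb3 (norm_nonneg _) (by positivity)
      _ = _ := by ring
  have e2 : (D + C + D + C * D) / (n : ℝ) = D / n + C / n + D / n + C * D / n := by ring
  rw [e2]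
  refine (norm_add_le _ _).trans (add_le_add ?_ hab)
  refine (norm_sub_le _ _).trans (add_le_add ?_ hb1)
  refine (norm_sub_le _ _).trans (add_le_add ?_ ha2)
  rw [norm_neg]
  exact hb2
end

section
/- Fix t > 0. There exist a constant C > 0 and an integer N such that for every integer n ≥ N, the logarithmic derivative of the spherical Bessel function of the second kind satisfies −n − 1 + t²/(2n) − (5/12)·t²/n² − C/n³ ≤ t·y_n'(t)/y_n(t) ≤ −n − 1 + t²/(2n) + (11/12)·t²/n² + C/n³. -/
noncomputable def auxA : ℕ → ℝ → ℝ
  | 0, z => Real.sin z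
  | 1, z => Real.sin z - z * Real.cos z
  | (n + 2), z => (2 * (n : ℝ) + 3) * auxA (n + 1) z - z ^ 2 * auxA n z

noncomputable def auxB : ℕ → ℝ → ℝ
  | 0, z => -Real.cos z
  | 1, z => -Real.cos z - z * Real.sin z
  | (n + 2), z => (2 * (n : ℝ) + 3) * auxB (n + 1) z - z ^ 2 * auxB n z

noncomputable def auxc : ℕ → ℝ
  | 0 => 1
  | (n + 1) => (2 * (n : ℝ) + 3) * auxc n

lemma auxc_ge (n : ℕ) : (n : ℝ) + 1 ≤ auxc n := by
  induction n with
  | zero => simp [auxc]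
  | succ n ih =>
    simp only [auxc]; push_cast
    have : (0 : ℝ) ≤ n := Nat.cast_nonneg n
    nlinarith

lemma auxA_zero (n : ℕ) : auxA n 0 = 0 := by
  induction n using Nat.twoStepInduction with
  | zero => simp [auxA]
  | one => simp [auxA]
  | more n h1 h2 => simp [auxA, h2]

lemma auxA_deriv (n : ℕ) (z : ℝ) : HasDerivAt (auxA (n + 1)) (z * auxA n z) z := by
  induction n using Nat.twoStepInduction with
  | zero =>
    have := (Real.hasDerivAt_sin z).sub ((hasDerivAt_id z).mul (Real.hasDerivAt_cos z))
    refine (this.congr_of_eventuallyEq (Filter.Eventually.of_forall fun x => ?_)).congr_deriv ?_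
    · simp [auxA]
    · simp [auxA]
  | one =>
    have h0 := (Real.hasDerivAt_sin z)
    have h1 := (Real.hasDerivAt_sin z).sub ((hasDerivAt_id z).mul (Real.hasDerivAt_cos z))
    have := (h1.const_mul 3).sub (((hasDerivAt_id z).pow 2).mul h0)
    refine (this.congr_of_eventuallyEq (Filter.Eventually.of_forall fun x => ?_)).congr_deriv ?_
    · simp [auxA]
    · simp [auxA]; try ring
  | more n h1 h2 =>
    have := (h2.const_mul (2 * ((n + 1 : ℕ) : ℝ) + 3)).sub (((hasDerivAt_id z).pow 2).mul h1)
    refine (this.congr_of_eventuallyEq (Filter.Eventually.of_forall fun x => ?_)).congr_deriv ?_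
    · simp [auxA]
    · simp [auxA]; try ring

lemma auxB_deriv (n : ℕ) (z : ℝ) : HasDerivAt (auxB (n + 1)) (z * auxB n z) z := by
  induction n using Nat.twoStepInduction with
  | zero =>
    have := (Real.hasDerivAt_cos z).neg.sub ((hasDerivAt_id z).mul (Real.hasDerivAt_sin z))
    refine (this.congr_of_eventuallyEq (Filter.Eventually.of_forall fun x => ?_)).congr_deriv ?_
    · simp [auxB]
    · simp [auxB]
  | one =>
    have h0 := (Real.hasDerivAt_cos z).neg
    have h1 := (Real.hasDerivAt_cos z).neg.sub ((hasDerivAt_id z).mul (Real.hasDerivAt_sin z))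
    have := (h1.const_mul 3).sub (((hasDerivAt_id z).pow 2).mul h0)
    refine (this.congr_of_eventuallyEq (Filter.Eventually.of_forall fun x => ?_)).congr_deriv ?_
    · simp [auxB]
    · simp [auxB]; try ring
  | more n h1 h2 =>
    have := (h2.const_mul (2 * ((n + 1 : ℕ) : ℝ) + 3)).sub (((hasDerivAt_id z).pow 2).mul h1)
    refine (this.congr_of_eventuallyEq (Filter.Eventually.of_forall fun x => ?_)).congr_deriv ?_
    · simp [auxB]
    · simp [auxB]; try ring

lemma auxA_bound (n : ℕ) : ∀ z : ℝ, 0 ≤ z → |auxA n z| ≤ z ^ (2 * n + 1) / auxc n := by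
  induction n with
  | zero =>
    intro z hz
    simp only [auxA, auxc]
    have := Real.abs_sin_le_abs (x := z)
    simpa [abs_of_nonneg hz] using this
  | succ n ih =>
    intro z hz
    have hc : 0 < auxc n := by have := auxc_ge n; have h : (0 : ℝ) ≤ n := Nat.cast_nonneg n; linarith
    have hn : (0 : ℝ) < 2 * n + 3 := by positivity
    have hG : ∀ x, HasDerivAt (fun x : ℝ => x ^ (2 * (n + 1) + 1) / auxc (n + 1))
        (x * (x ^ (2 * n + 1) / auxc n)) x := by
      intro x
      have := (hasDerivAt_pow (2 * (n + 1) + 1) x).div_const (auxc (n + 1))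
      refine this.congr_deriv ?_
      simp only [auxc]
      push_cast
      field_simp
      ring
    have key : ∀ e : ℝ, |e| = 1 → e * auxA (n + 1) z ≤ z ^ (2 * (n + 1) + 1) / auxc (n + 1) := by
      intro e he
      have hF : ∀ x, HasDerivAt (fun x : ℝ => x ^ (2 * (n + 1) + 1) / auxc (n + 1)
          - e * auxA (n + 1) x) (x * (x ^ (2 * n + 1) / auxc n) - e * (x * auxA n x)) x :=
        fun x => (hG x).sub ((auxA_deriv n x).const_mul e)
      have hm : MonotoneOn (fun x : ℝ => x ^ (2 * (n + 1) + 1) / auxc (n + 1)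
          - e * auxA (n + 1) x) (Set.Ici 0) := by
        apply monotoneOn_of_deriv_nonneg (convex_Ici 0)
        · exact fun x _ => (hF x).continuousAt.continuousWithinAt
        · exact fun x _ => (hF x).differentiableAt.differentiableWithinAt
        · intro x hx
          rw [interior_Ici] at hx
          have hx : 0 < x := hx
          rw [(hF x).deriv]
          have h1 := ih x hx.le
          have h2 : e * auxA n x ≤ |auxA n x| := by
            calc e * auxA n x ≤ |e * auxA n x| := le_abs_self _
              _ = _ := by rw [abs_mul, he, one_mul]
          have := mul_nonneg hx.le (sub_nonneg.2 (h2.trans h1))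
          linarith
      have := hm (Set.self_mem_Ici) (Set.mem_Ici.2 hz) hz
      simp [auxA_zero] at this
      linarith
    have h1 := key 1 (by simp)
    have h2 := key (-1) (by simp)
    rw [abs_le]
    constructor <;> linarith

lemma auxW (n : ℕ) (z : ℝ) :
    auxA (n + 1) z * auxB n z - auxA n z * auxB (n + 1) z = z ^ (2 * n + 1) := by
  induction n with
  | zero =>
    simp [auxA, auxB]
    have := Real.sin_sq_add_cos_sq z
    linear_combination z * this
  | succ n ih =>
    simp only [auxA, auxB]
    linear_combination z ^ 2 * ih

lemma aux_y_s5 (n : ℕ) (z : ℝ) (hz : 0 < z) : ysph n z = auxB n z / z ^ (n + 1) := by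
  induction n using Nat.twoStepInduction with
  | zero => simp [auxB, ysph]
  | one => simp [auxB, ysph]; field_simp
  | more n h1 h2 => simp only [auxB, ysph, h1, h2]; field_simp; ring

lemma aux_logd (n : ℕ) (t : ℝ) (ht : 0 < t) (hB : auxB (n + 1) t ≠ 0) :
    t * deriv (ysph (n + 1)) t / ysph (n + 1) t
      = t ^ 2 * auxB n t / auxB (n + 1) t - (n + 2) := by
  have he : ysph (n + 1) =ᶠ[nhds t] fun z => auxB (n + 1) z / z ^ (n + 2) := by
    filter_upwards [lt_mem_nhds ht] with z hz
    exact aux_y_s5 (n + 1) z hz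
  have hd := (auxB_deriv n t).fun_div (hasDerivAt_pow (n + 2) t) (by positivity)
  rw [he.deriv_eq, hd.deriv, aux_y_s5 _ _ ht]
  push_cast
  field_simp
  try ring

lemma aux_init (t : ℝ) (ht : 0 < t) (N : ℕ) (hN : t ^ 2 ≤ N) :
    ∃ n, N ≤ n ∧ auxB (n + 1) t ≠ 0 ∧ t ^ 2 * |auxB n t| ≤ (n + 1) * |auxB (n + 1) t| := by
  by_contra! hcon
  have hdec : ∀ n, N ≤ n → |auxB (n + 1) t| ≤ |auxB n t| := by
    intro n hn
    by_cases h0 : auxB (n + 1) t = 0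
    · simp [h0]
    · have h := hcon n hn h0
      have hn' : (N : ℝ) ≤ n := by exact_mod_cast hn
      by_contra! hlt
      have h0 := abs_nonneg (auxB n t)
      nlinarith [sq_nonneg t]
  have hbd : ∀ n, N ≤ n → |auxB n t| ≤ |auxB N t| := by
    intro n hn
    induction n, hn using Nat.le_induction with
    | base => exact le_rfl
    | succ n hn ih => exact (hdec n hn).trans ih
  obtain ⟨m, hm⟩ := exists_nat_gt ((t ^ 2 + 1) * |auxB N t|)
  set n := N + m with hn
  have hW := auxW n t
  have a1 := auxA_bound n t ht.le
  have a2 := auxA_bound (n + 1) t ht.le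
  have b1 := hbd n (by omega)
  have b2 := hbd (n + 1) (by omega)
  have c1 := auxc_ge n
  have c2 := auxc_ge (n + 1)
  set M := |auxB N t|
  have hM : 0 ≤ M := abs_nonneg _
  have hp : 0 < t ^ (2 * n + 1) := by positivity
  have hmn : (m : ℝ) ≤ n := by rw [hn]; push_cast; have : (0:ℝ) ≤ N := Nat.cast_nonneg N; linarith
  have hn0 : (0 : ℝ) < n + 1 := by positivity
  have a1' : |auxA n t| ≤ t ^ (2 * n + 1) / (n + 1) := a1.trans (by gcongr)
  have a2' : |auxA (n + 1) t| ≤ t ^ 2 * t ^ (2 * n + 1) / (n + 1) := by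
    refine a2.trans ?_
    rw [show t ^ (2 * (n + 1) + 1) = t ^ 2 * t ^ (2 * n + 1) by ring]
    gcongr
    push_cast at c2
    linarith
  have : t ^ (2 * n + 1) ≤ t ^ 2 * t ^ (2 * n + 1) / (n + 1) * M
      + t ^ (2 * n + 1) / (n + 1) * M := by
    calc t ^ (2 * n + 1) ≤ |auxA (n + 1) t * auxB n t - auxA n t * auxB (n + 1) t| := by
          rw [hW]; exact le_abs_self _
      _ ≤ |auxA (n + 1) t * auxB n t| + |auxA n t * auxB (n + 1) t| := abs_sub _ _
      _ ≤ _ := by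
          rw [abs_mul, abs_mul]
          gcongr
  have h3 : t ^ (2 * n + 1) * (n + 1) ≤ t ^ (2 * n + 1) * ((t ^ 2 + 1) * M) := by
    field_simp at this
    nlinarith
  have := le_of_mul_le_mul_left h3 hp
  linarith

lemma aux_step_s5 (t : ℝ) (n : ℕ) (h0 : auxB (n + 1) t ≠ 0)
    (h : t ^ 2 * |auxB n t| ≤ (n + 1) * |auxB (n + 1) t|) :
    auxB (n + 2) t ≠ 0 ∧ (n + 2) * |auxB (n + 1) t| ≤ |auxB (n + 2) t| := by
  have h1 : (n + 2) * |auxB (n + 1) t| ≤ |auxB (n + 2) t| := by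
    have e : auxB (n + 2) t = (2 * (n : ℝ) + 3) * auxB (n + 1) t - t ^ 2 * auxB n t := rfl
    have := abs_sub_abs_le_abs_sub ((2 * (n : ℝ) + 3) * auxB (n + 1) t) (t ^ 2 * auxB n t)
    rw [← e, abs_mul, abs_mul, abs_of_nonneg (sq_nonneg t),
      abs_of_nonneg (show (0 : ℝ) ≤ 2 * n + 3 by positivity)] at this
    linarith
  refine ⟨?_, h1⟩
  have : 0 < (n + 2) * |auxB (n + 1) t| := by positivity
  exact abs_pos.1 (this.trans_le h1)

lemma aux_all (t : ℝ) (ht : 0 < t) : ∃ N : ℕ, ∀ n, N ≤ n →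
    auxB (n + 1) t ≠ 0 ∧ (n + 1) * |auxB n t| ≤ |auxB (n + 1) t| := by
  obtain ⟨N, hN⟩ := exists_nat_ge (t ^ 2)
  obtain ⟨m, hm, h0, h1⟩ := aux_init t ht N hN
  refine ⟨m + 1, fun n hn => ?_⟩
  induction n, hn using Nat.le_induction with
  | base =>
    have := aux_step_s5 t m h0 h1
    push_cast
    rw [show (m : ℝ) + 1 + 1 = m + 2 by ring]
    exact this
  | succ n hn ih =>
    have hNn : (N : ℝ) ≤ n := by exact_mod_cast (by omega : N ≤ n)
    have := aux_step_s5 t n ih.1 (by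
      have h2 := abs_nonneg (auxB n t)
      have h3 := abs_nonneg (auxB (n + 1) t)
      have h4 : (0 : ℝ) ≤ n := Nat.cast_nonneg n
      nlinarith [ih.2])
    push_cast
    rw [show (n : ℝ) + 1 + 1 = n + 2 by ring]
    exact this

lemma aux_s (t : ℝ) (ht : 0 < t) : ∃ N : ℕ, ∀ n, N ≤ n → auxB (n + 1) t ≠ 0 ∧
    |t ^ 2 * auxB n t / auxB (n + 1) t - t ^ 2 / (2 * n + 1)| ≤ 2 * t ^ 4 / (n + 1) ^ 3 := by
  obtain ⟨N, hN⟩ := aux_all t ht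
  obtain ⟨K, hK⟩ := exists_nat_ge (t ^ 2)
  refine ⟨N + K + 2, fun m hm => ?_⟩
  obtain ⟨n, rfl⟩ : ∃ n, m = n + 1 := ⟨m - 1, by omega⟩
  obtain ⟨h0, h1⟩ := hN n (by omega)
  obtain ⟨h2, h3⟩ := hN (n + 1) (by omega)
  refine ⟨h2, ?_⟩
  have e : auxB (n + 2) t = (2 * (n : ℝ) + 3) * auxB (n + 1) t - t ^ 2 * auxB n t := rfl
  have hb : t ^ 2 * auxB (n + 1) t / auxB (n + 2) t - t ^ 2 / (2 * n + 3)
      = t ^ 4 * (auxB n t / auxB (n + 2) t) / (2 * n + 3) := by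
    field_simp
    rw [e]; ring
  have hq : |auxB n t / auxB (n + 2) t| ≤ 1 / ((n + 1) * (n + 2)) := by
    rw [abs_div, div_le_div_iff₀ (abs_pos.2 h2) (by positivity)]
    push_cast at h3
    nlinarith
  push_cast
  rw [show (2 * ((n : ℝ) + 1) + 1) = 2 * n + 3 by ring, hb, abs_div, abs_mul,
    abs_of_pos (show (0 : ℝ) < 2 * n + 3 by positivity), abs_of_pos (show 0 < t ^ 4 by positivity)]
  calc t ^ 4 * |auxB n t / auxB (n + 2) t| / (2 * n + 3)
      ≤ t ^ 4 * (1 / ((n + 1) * (n + 2))) / (2 * n + 3) := by gcongr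
    _ ≤ 2 * t ^ 4 / ((n : ℝ) + 1 + 1) ^ 3 := by
      have : (1 / (((n : ℝ) + 1) * (n + 2))) / (2 * n + 3) ≤ 2 / ((n : ℝ) + 1 + 1) ^ 3 := by
        rw [div_div, div_le_div_iff₀ (by positivity) (by positivity)]
        have : (0 : ℝ) ≤ n := Nat.cast_nonneg n
        nlinarith [pow_nonneg this 2, pow_nonneg this 3]
      have := mul_le_mul_of_nonneg_left this (show 0 ≤ t ^ 4 by positivity)
      calc _ = _ := by rw [mul_div_assoc]
        _ ≤ _ := this
        _ = _ := by ring

/-- Asymptotic two-sided bound on the logarithmic derivative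
`t y_n'(t)/y_n(t)` of the spherical Bessel function of the second kind. -/
theorem logderiv_spherical_bessel_y_asymptotic (t : ℝ) (ht : 0 < t) :
    ∃ C : ℝ, 0 < C ∧ ∃ N : ℕ, ∀ n : ℕ, N ≤ n →
      -(n : ℝ) - 1 + t ^ 2 / (2 * (n : ℝ)) - (5/12) * t ^ 2 / (n : ℝ) ^ 2 - C / (n : ℝ) ^ 3
        ≤ t * deriv (ysph n) t / ysph n t ∧
      t * deriv (ysph n) t / ysph n t
        ≤ -(n : ℝ) - 1 + t ^ 2 / (2 * (n : ℝ)) + (11/12) * t ^ 2 / (n : ℝ) ^ 2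
          + C / (n : ℝ) ^ 3 := by
  obtain ⟨N, hN⟩ := aux_s t ht
  refine ⟨2 * t ^ 4, by positivity, N + 1, fun m hm => ?_⟩
  obtain ⟨n, rfl⟩ : ∃ n, m = n + 1 := ⟨m - 1, by omega⟩
  obtain ⟨h0, h1⟩ := hN n (by omega)
  rw [aux_logd n t ht h0]
  push_cast
  rw [abs_le] at h1
  have hn : (0 : ℝ) ≤ n := Nat.cast_nonneg n
  have l1 : t ^ 2 / (2 * ((n : ℝ) + 1)) ≤ t ^ 2 / (2 * n + 1) := by
    gcongr; linarith
  have l2 : 0 ≤ (5 / 12) * t ^ 2 / ((n : ℝ) + 1) ^ 2 := by positivity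
  have l3 : t ^ 2 / (2 * n + 1) ≤ t ^ 2 / (2 * ((n : ℝ) + 1))
      + (11 / 12) * t ^ 2 / ((n : ℝ) + 1) ^ 2 := by
    have : 1 / (2 * (n : ℝ) + 1) ≤ 1 / (2 * ((n : ℝ) + 1)) + (11 / 12) / ((n : ℝ) + 1) ^ 2 := by
      rw [div_add_div _ _ (by positivity) (by positivity),
        div_le_div_iff₀ (by positivity) (by positivity)]
      nlinarith [pow_nonneg hn 2, pow_nonneg hn 3]
    have := mul_le_mul_of_nonneg_left this (sq_nonneg t)
    calc _ = _ := by rw [div_eq_mul_one_div]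
      _ ≤ _ := this
      _ = _ := by ring
  constructor <;> linarith [h1.1, h1.2]
end

section
/- Fix z > 0. There exist constants C > 0 and ν₀ > z + 1 such that for every real ν ≥ ν₀, |log((ν−1)/z + √(((ν−1)/z)² − 1)) − (log(2ν/z) − 1/ν − (1/2 + z²/4)/ν²)| ≤ C/ν³. -/
theorem core_bound (z x s : ℝ) (hz : 0 < z) (hx : 0 < x) (hx4 : x ≤ 1/4) (hzx : z * x ≤ 1/2)
    (hs : 0 ≤ s) (hs2 : s ^ 2 = (1 - x) ^ 2 - (z * x) ^ 2) :
    |Real.log ((1 - x + s) / 2) - (- x - (1/2 + z ^ 2 / 4) * x ^ 2)|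
      ≤ (2 * (1 + z/4) ^ 3 + z ^ 2 * (1 + z/4) / 2 + z ^ 2 * (2 + z/4) / 4) * x ^ 3 := by
  have hzx0 : 0 < z * x := mul_pos hz hx
  have hshalf : 1/2 ≤ s := by
    by_contra h
    push Not at h
    nlinarith
  obtain ⟨u, hu⟩ : ∃ u, u = (1 + x - s) / 2 := ⟨_, rfl⟩
  have hsu : s = 1 + x - 2 * u := by linarith
  have hP : (1 - x + s) / 2 = 1 - u := by rw [hsu]; ring
  have hq : (u - x) * (2 * (1 - u)) = (z * x) ^ 2 / 2 := by rw [hsu] at hs2; nlinarith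
  have hge : 1 ≤ 2 * (1 - u) := by linarith
  have hd0 : 0 ≤ u - x := by
    by_contra h
    push Not at h
    nlinarith [sq_nonneg (z*x)]
  have hd1 : u - x ≤ (z * x) ^ 2 / 2 := by nlinarith
  have huK : u ≤ (1 + z/4) * x := by nlinarith
  have hu0 : 0 < u := by linarith
  have hu2 : u ≤ 1/2 := by linarith
  have hlog := Real.abs_log_sub_add_sum_range_le (x := u) (by rw [abs_of_pos hu0]; linarith) 2
  rw [abs_of_pos hu0] at hlog
  simp only [Finset.sum_range_succ, Finset.sum_range_zero] at hlog
  norm_num at hlog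
  have h3 : u ^ 3 / (1 - u) ≤ 2 * ((1 + z/4) * x) ^ 3 := by
    have hp : u ^ 3 ≤ ((1 + z/4) * x) ^ 3 := pow_le_pow_left₀ hu0.le huK 3
    rw [div_le_iff₀ (by linarith)]
    have : 0 < u ^ 3 := by positivity
    nlinarith
  have hA := hlog.trans h3
  -- second-order term of d
  have e1 : (u - x) - (z * x) ^ 2 / 4 = (u - x) * u := by linarith
  have b1 : (u - x) * u ≤ (z * x) ^ 2 / 2 * ((1 + z/4) * x) :=
    mul_le_mul hd1 huK hu0.le (by positivity)
  have b0 : 0 ≤ (u - x) * u := mul_nonneg hd0 hu0.le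
  have c1 : (u - x) * (u + x) ≤ (z * x) ^ 2 / 2 * ((2 + z/4) * x) :=
    mul_le_mul hd1 (by linarith) (by linarith) (by positivity)
  have c0 : 0 ≤ (u - x) * (u + x) := mul_nonneg hd0 (by linarith)
  rw [hP]
  rw [abs_le] at hA ⊢
  constructor <;> nlinarith [hA.1, hA.2]

/-- Asymptotics of `log((ν-1)/z + √(((ν-1)/z)² - 1))
= log(2ν/z) - 1/ν - (1/2 + z²/4)/ν² + O(1/ν³)`. -/
theorem log_arccosh_shifted_asymptotic (z : ℝ) (hz : 0 < z) :
    ∃ C : ℝ, 0 < C ∧ ∃ ν₀ : ℝ, z + 1 < ν₀ ∧ ∀ ν : ℝ, ν₀ ≤ ν →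
      |Real.log ((ν - 1) / z + Real.sqrt (((ν - 1) / z) ^ 2 - 1))
          - (Real.log (2 * ν / z) - 1 / ν - (1/2 + z ^ 2 / 4) / ν ^ 2)|
        ≤ C / ν ^ 3 := by
  refine ⟨2 * (1 + z/4) ^ 3 + z ^ 2 * (1 + z/4) / 2 + z ^ 2 * (2 + z/4) / 4, by positivity,
    2 * z + 4, by linarith, ?_⟩
  intro ν hν
  have hν0 : 0 < ν := by linarith
  have hr : 0 ≤ ((ν - 1) / z) ^ 2 - 1 := by
    have : 1 ≤ (ν - 1) / z := by rw [le_div_iff₀ hz]; linarith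
    nlinarith
  obtain ⟨S, hS⟩ : ∃ S, S = Real.sqrt (((ν - 1) / z) ^ 2 - 1) := ⟨_, rfl⟩
  have hS0 : 0 ≤ S := hS ▸ Real.sqrt_nonneg _
  have hS2 : S ^ 2 = ((ν - 1) / z) ^ 2 - 1 := by rw [hS, Real.sq_sqrt hr]
  have hx4 : 1 / ν ≤ 1/4 := one_div_le_one_div_of_le (by norm_num) (by linarith)
  have key := core_bound z (1/ν) (S * z / ν) hz (by positivity) hx4
    (by rw [mul_one_div, div_le_iff₀ hν0]; linarith) (by positivity)
    (by rw [div_pow, mul_pow, hS2]; field_simp)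
  rw [← hS]
  have hpos : 0 < (1 - 1/ν + S * z / ν) / 2 := by
    have : 0 ≤ S * z / ν := by positivity
    linarith
  have hfac : (ν - 1) / z + S = (2 * ν / z) * ((1 - 1/ν + S * z / ν) / 2) := by
    field_simp
  rw [hfac, Real.log_mul (by positivity) hpos.ne']
  convert key using 1
  · congr 1
    field_simp
    ring
  · field_simp
end

section
/- Fix z > 0. There exist constants C > 0 and ν₀ > z + 1 such that for every real ν ≥ ν₀, |(ν−1)·log((ν−1)/z + √(((ν−1)/z)² − 1)) − ν·log(ν/z + √((ν/z)² − 1)) − (−log(2ν/z) − 1 + 1/(2ν))| ≤ C/ν². -/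
lemma g_bound (x : ℝ) (hx : 1 ≤ x) :
    |Real.log (x + Real.sqrt (x ^ 2 - 1)) - Real.log (2 * x) + 1 / (4 * x ^ 2)| ≤ 2 / x ^ 4 := by
  have hs0 := Real.sqrt_nonneg (x ^ 2 - 1)
  have hs2 : Real.sqrt (x ^ 2 - 1) ^ 2 = x ^ 2 - 1 := Real.sq_sqrt (by nlinarith)
  set s := Real.sqrt (x ^ 2 - 1)
  obtain ⟨w, hw⟩ : ∃ w, w = x + s := ⟨_, rfl⟩
  have hwx : x ≤ w := by linarith
  have hw0 : 0 < w := by linarith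
  have hxw : 2 * x * w = w ^ 2 + 1 := by rw [hw]; nlinarith
  obtain ⟨t, ht⟩ : ∃ t, t = 1 / w ^ 2 := ⟨_, rfl⟩
  have ht0 : 0 < t := by rw [ht]; positivity
  have h2x : 2 * x = w * (1 + t) := by
    rw [ht]; field_simp; linarith
  have hlog : Real.log (2 * x) = Real.log w + Real.log (1 + t) := by
    rw [h2x, Real.log_mul hw0.ne' (by positivity)]
  have hq : 1 / (4 * x ^ 2) = t / (1 + t) ^ 2 := by
    have : 4 * x ^ 2 = w ^ 2 * (1 + t) ^ 2 := by
      have : 4 * x ^ 2 = (2 * x) ^ 2 := by ring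
      rw [this, h2x]; ring
    rw [this, ht]
    field_simp
  have htx : t ≤ 1 / x ^ 2 := by
    rw [ht]; gcongr
  have ht2 : 2 * t ^ 2 ≤ 2 / x ^ 4 := by
    have : 2 / x ^ 4 = 2 * (1 / x ^ 2) ^ 2 := by field_simp
    rw [this]; gcongr
  have hu : Real.log (1 + t) ≤ t := by
    have := Real.log_le_sub_one_of_pos (show 0 < 1 + t by positivity); linarith
  have hl : t / (1 + t) ≤ Real.log (1 + t) := by
    have := Real.one_sub_inv_le_log_of_pos (show 0 < 1 + t by positivity)
    have e : t / (1 + t) = 1 - (1 + t)⁻¹ := by field_simp; ring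
    linarith
  have h1 : t / (1 + t) ^ 2 ≤ t / (1 + t) := by
    apply div_le_div_of_nonneg_left ht0.le (by positivity); nlinarith
  have h2 : t - 2 * t ^ 2 ≤ t / (1 + t) ^ 2 := by
    rw [le_div_iff₀ (by positivity)]
    nlinarith [pow_pos ht0 2, pow_pos ht0 3, pow_pos ht0 4]
  have hp : 0 < 2 / x ^ 4 := by positivity
  rw [← hw, hlog, hq, abs_le]
  constructor <;> linarith

/-- Asymptotics of `A(ν) = (ν-1) log((ν-1)/z + √(((ν-1)/z)² - 1))
- ν log(ν/z + √((ν/z)² - 1)) = -log(2ν/z) - 1 + 1/(2ν) + O(1/ν²)`. -/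
theorem A_asymptotic (z : ℝ) (hz : 0 < z) :
    ∃ C : ℝ, 0 < C ∧ ∃ ν₀ : ℝ, z + 1 < ν₀ ∧ ∀ ν : ℝ, ν₀ ≤ ν →
      |(ν - 1) * Real.log ((ν - 1) / z + Real.sqrt (((ν - 1) / z) ^ 2 - 1))
          - ν * Real.log (ν / z + Real.sqrt ((ν / z) ^ 2 - 1))
          - (-Real.log (2 * ν / z) - 1 + 1 / (2 * ν))| ≤ C / ν ^ 2 := by
  refine ⟨9 * z ^ 4 + z ^ 2 + 3, by positivity, z + 2, by linarith, fun ν hν => ?_⟩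
  have hν2 : 2 ≤ ν := by linarith
  have hν0 : 0 < ν := by linarith
  have hm0 : 0 < ν - 1 := by linarith
  have b1 := g_bound ((ν - 1) / z) (by rw [le_div_iff₀ hz]; linarith)
  have b2 := g_bound (ν / z) (by rw [le_div_iff₀ hz]; linarith)
  have b3 := Real.abs_log_sub_add_sum_range_le (x := 1 / ν)
    (by rw [abs_of_pos (by positivity), div_lt_one hν0]; linarith) 2
  rw [abs_of_pos (show 0 < 1 / ν by positivity)] at b3
  simp only [Finset.sum_range_succ, Finset.sum_range_zero] at b3
  have e3 : Real.log (2 * ((ν - 1) / z)) = Real.log (2 * ν / z) + Real.log (1 - 1 / ν) := by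
    have : 1 - 1 / ν = (ν - 1) / ν := by field_simp
    rw [this, ← Real.log_mul (by positivity) (by positivity)]
    congr 1; field_simp
  have e4 : Real.log (2 * (ν / z)) = Real.log (2 * ν / z) := by congr 1; ring
  rw [e3] at b1
  rw [e4] at b2
  generalize Real.log ((ν - 1) / z + Real.sqrt (((ν - 1) / z) ^ 2 - 1)) = P at *
  generalize Real.log (ν / z + Real.sqrt ((ν / z) ^ 2 - 1)) = Q at *
  generalize Real.log (2 * ν / z) = L at *
  generalize Real.log (1 - 1 / ν) = M at *
  have c1 : |(ν - 1) * (P - (L + M) + 1 / (4 * ((ν - 1) / z) ^ 2))| ≤ 8 * z ^ 4 / ν ^ 2 := by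
    rw [abs_mul, abs_of_pos hm0]
    refine (mul_le_mul_of_nonneg_left b1 hm0.le).trans ?_
    have : (ν - 1) * (2 / ((ν - 1) / z) ^ 4) = 2 * z ^ 4 / (ν - 1) ^ 3 := by field_simp
    rw [this, div_le_div_iff₀ (by positivity) (by positivity)]
    have : ν ^ 2 ≤ 4 * (ν - 1) ^ 3 := by
      obtain ⟨a, rfl⟩ : ∃ a, ν = a + 2 := ⟨ν - 2, by ring⟩
      have ha : 0 ≤ a := by linarith
      nlinarith [pow_nonneg ha 2, pow_nonneg ha 3]
    nlinarith [mul_le_mul_of_nonneg_left this (show 0 ≤ 2 * z ^ 4 by positivity)]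
  have c2 : |ν * (Q - L + 1 / (4 * (ν / z) ^ 2))| ≤ z ^ 4 / ν ^ 2 := by
    rw [abs_mul, abs_of_pos hν0]
    refine (mul_le_mul_of_nonneg_left b2 hν0.le).trans ?_
    have : ν * (2 / (ν / z) ^ 4) = z ^ 4 * 2 / ν ^ 3 := by field_simp
    rw [this, div_le_div_iff₀ (by positivity) (by positivity)]
    have : 2 * ν ^ 2 ≤ ν ^ 3 := by nlinarith [pow_pos hν0 2]
    nlinarith [mul_le_mul_of_nonneg_left this (show 0 ≤ z ^ 4 by positivity)]
  have c3 : |(ν - 1) * (M + 1 / ν + 1 / (2 * ν ^ 2))| ≤ 1 / ν ^ 2 := by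
    rw [abs_mul, abs_of_pos hm0]
    have e : M + 1 / ν + 1 / (2 * ν ^ 2)
      = 0 + (1 / ν) ^ (0 + 1) / (((0 : ℕ) : ℝ) + 1) + (1 / ν) ^ (1 + 1) / (((1 : ℕ) : ℝ) + 1) + M := by
      push_cast; field_simp; ring
    rw [e]
    refine (mul_le_mul_of_nonneg_left b3 hm0.le).trans (le_of_eq ?_)
    have : 1 - 1 / ν = (ν - 1) / ν := by field_simp
    rw [this, show 2 + 1 = 3 from rfl, one_div, inv_pow]; field_simp
  have c4 : |z ^ 2 / (4 * ν * (ν - 1))| ≤ z ^ 2 / ν ^ 2 := by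
    rw [abs_of_pos (by positivity), div_le_div_iff₀ (by positivity) (by positivity)]
    apply mul_le_mul_of_nonneg_left _ (by positivity)
    nlinarith
  have c5 : 0 < 1 / ν ^ 2 := by positivity
  have key : (ν - 1) * P - ν * Q - (-L - 1 + 1 / (2 * ν))
      = (ν - 1) * (P - (L + M) + 1 / (4 * ((ν - 1) / z) ^ 2))
        - ν * (Q - L + 1 / (4 * (ν / z) ^ 2))
        + (ν - 1) * (M + 1 / ν + 1 / (2 * ν ^ 2)) - z ^ 2 / (4 * ν * (ν - 1))
        + (1 / ν ^ 2) / 2 := by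
    field_simp; ring
  have fin : (9 * z ^ 4 + z ^ 2 + 3) / ν ^ 2
      = 8 * z ^ 4 / ν ^ 2 + z ^ 4 / ν ^ 2 + 1 / ν ^ 2 + z ^ 2 / ν ^ 2 + 2 * (1 / ν ^ 2) := by
    ring
  rw [key, fin]
  rw [abs_le] at *
  constructor <;> linarith [c1.1, c1.2, c2.1, c2.2, c3.1, c3.2, c4.1, c4.2]
end

section
/- Fix z > 0. Define, for real ν > z + 1, A(ν) = (ν−1)·log((ν−1)/z + √(((ν−1)/z)² − 1)) − ν·log(ν/z + √((ν/z)² − 1)) and B(ν) = √(ν² − z²) − √((ν−1)² − z²). Then there exist constants C > 0 and ν₀ > z + 1 such that for every real ν ≥ ν₀, |exp(A(ν) + B(ν)) − (z/(2ν) + (z/4)/ν²)| ≤ C/ν³. -/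
lemma aux_sqrt (z x : ℝ) (hz : 0 < z) :
    Real.sqrt ((x / z) ^ 2 - 1) = Real.sqrt (x ^ 2 - z ^ 2) / z := by
  have : (x / z) ^ 2 - 1 = (x ^ 2 - z ^ 2) / z ^ 2 := by field_simp
  rw [this, Real.sqrt_div' _ (by positivity), Real.sqrt_sq hz.le]

lemma aux_deriv_s11 (z x : ℝ) (hz : 0 < z) (hx : z < x) :
    HasDerivAt (fun x : ℝ => x * Real.log (x / z + Real.sqrt (x ^ 2 - z ^ 2) / z)
      - Real.sqrt (x ^ 2 - z ^ 2) - (x * Real.log (2 * x / z) - x))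
      (Real.log (x / z + Real.sqrt (x ^ 2 - z ^ 2) / z) - Real.log (2 * x / z)) x := by
  have hx0 : 0 < x := hz.trans hx
  have hp : 0 < x ^ 2 - z ^ 2 := by nlinarith
  have hR : 0 < Real.sqrt (x ^ 2 - z ^ 2) := Real.sqrt_pos.mpr hp
  have h1 : HasDerivAt (fun x : ℝ => Real.sqrt (x ^ 2 - z ^ 2))
      (x / Real.sqrt (x ^ 2 - z ^ 2)) x := by
    have := (((hasDerivAt_id x).pow 2).sub_const (z ^ 2)).sqrt hp.ne'
    refine this.congr_deriv ?_
    simp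
    field_simp
  have h2 := (((hasDerivAt_id x).div_const z).add (h1.div_const z)).log
    (by simp only [id, Pi.add_apply]; positivity)
  have h3 := (((hasDerivAt_id x).const_mul 2).div_const z).log (by simp only [id]; positivity)
  have h4 := (((hasDerivAt_id x).mul h2).sub h1).sub
    (((hasDerivAt_id x).mul h3).sub (hasDerivAt_id x))
  refine h4.congr_deriv ?_
  simp only [id, Pi.add_apply]
  set R := Real.sqrt (x ^ 2 - z ^ 2)
  field_simp
  ring

lemma aux_bound (z x : ℝ) (hz : 0 < z) (hx : z < x) :
    |Real.log (x / z + Real.sqrt (x ^ 2 - z ^ 2) / z) - Real.log (2 * x / z)|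
      ≤ z ^ 2 / x ^ 2 := by
  have hx0 : 0 < x := hz.trans hx
  have hp : 0 < x ^ 2 - z ^ 2 := by nlinarith
  have hR : 0 < Real.sqrt (x ^ 2 - z ^ 2) := Real.sqrt_pos.mpr hp
  have hsq := Real.sq_sqrt hp.le
  set R := Real.sqrt (x ^ 2 - z ^ 2)
  have hRx : R ≤ x := by nlinarith
  rw [← Real.log_div (by positivity) (by positivity)]
  have e : (x / z + R / z) / (2 * x / z) = (x + R) / (2 * x) := by field_simp
  rw [e, abs_le]
  have hpos : 0 < (x + R) / (2 * x) := by positivity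
  constructor
  · have := Real.one_sub_inv_le_log_of_pos hpos
    refine le_trans ?_ this
    rw [inv_div, ← sub_nonneg]
    have : 1 - 2 * x / (x + R) - -(z ^ 2 / x ^ 2)
        = (x - R) * R * (2 * x + R) / (x ^ 2 * (x + R)) := by
      have : z ^ 2 = x ^ 2 - R ^ 2 := by linarith
      rw [this]; field_simp; ring
    rw [this]
    have : 0 ≤ x - R := by linarith
    positivity
  · have : Real.log ((x + R) / (2 * x)) ≤ 0 := by
      apply Real.log_nonpos hpos.le
      rw [div_le_one (by positivity)]; linarith
    exact this.trans (by positivity)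

lemma aux_log (ν : ℝ) (h : 2 ≤ ν) :
    |1 + (ν - 1) * Real.log (1 - ν⁻¹) - ν⁻¹ / 2| ≤ 3 / 2 * ν⁻¹ ^ 2 := by
  have hν : 0 < ν := by linarith
  have hu : 0 < ν⁻¹ := by positivity
  have hu2 : ν⁻¹ ≤ 1 / 2 := by rw [inv_eq_one_div]; gcongr
  have e : ν - 1 = (1 - ν⁻¹) / ν⁻¹ := by field_simp
  rw [e]
  set u := ν⁻¹
  have hl := Real.abs_log_sub_add_sum_range_le (x := u) (by rw [abs_of_pos hu]; linarith) 2
  rw [abs_of_pos hu] at hl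
  simp [Finset.sum_range_succ] at hl
  norm_num at hl
  have h1 : 0 < 1 - u := by linarith
  have e2 : 1 + (1 - u) / u * Real.log (1 - u) - u / 2
      = (1 - u) / u * (u + u ^ 2 / 2 + Real.log (1 - u)) + u ^ 2 / 2 := by
    field_simp; ring
  rw [e2]
  refine (abs_add_le _ _).trans ?_
  rw [abs_mul, abs_of_pos (show 0 < (1 - u) / u by positivity),
    abs_of_pos (show 0 < u ^ 2 / 2 by positivity)]
  have := mul_le_mul_of_nonneg_left hl (show 0 ≤ (1 - u) / u by positivity)
  have e3 : (1 - u) / u * (u ^ 3 / (1 - u)) = u ^ 2 := by field_simp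
  linarith


/-- With `A(ν) = (ν-1) log((ν-1)/z + √(((ν-1)/z)² - 1)) - ν log(ν/z + √((ν/z)² - 1))`
and `B(ν) = √(ν² - z²) - √((ν-1)² - z²)`, one has
`exp(A(ν) + B(ν)) = z/(2ν) + (z/4)/ν² + O(1/ν³)`. -/
theorem exp_A_plus_B_asymptotic (z : ℝ) (hz : 0 < z) :
    ∃ C : ℝ, 0 < C ∧ ∃ ν₀ : ℝ, z + 1 < ν₀ ∧ ∀ ν : ℝ, ν₀ ≤ ν →
      |Real.exp (((ν - 1) * Real.log ((ν - 1) / z + Real.sqrt (((ν - 1) / z) ^ 2 - 1))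
              - ν * Real.log (ν / z + Real.sqrt ((ν / z) ^ 2 - 1)))
            + (Real.sqrt (ν ^ 2 - z ^ 2) - Real.sqrt ((ν - 1) ^ 2 - z ^ 2)))
          - (z / (2 * ν) + (z / 4) / ν ^ 2)| ≤ C / ν ^ 3 := by
  have hM : ∃ M : ℝ, M = 3 / 2 + 4 * z ^ 2 := ⟨_, rfl⟩
  obtain ⟨M, hM⟩ := hM
  have hM0 : 0 < M := by rw [hM]; positivity
  refine ⟨z * (M + 3) / 2, by positivity, z + 2 + M, by linarith, ?_⟩
  intro ν hν
  have hν2 : 2 ≤ ν := by linarith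
  have hν0 : 0 < ν := by linarith
  rw [aux_sqrt z _ hz, aux_sqrt z _ hz]
  obtain ⟨ξ, ⟨hξ1, hξ2⟩, hξ⟩ := exists_hasDerivAt_eq_slope
    (fun x : ℝ => x * Real.log (x / z + Real.sqrt (x ^ 2 - z ^ 2) / z)
      - Real.sqrt (x ^ 2 - z ^ 2) - (x * Real.log (2 * x / z) - x))
    (fun x => Real.log (x / z + Real.sqrt (x ^ 2 - z ^ 2) / z) - Real.log (2 * x / z))
    (show ν - 1 < ν by linarith)
    (fun x hx => (aux_deriv_s11 z x hz (by linarith [hx.1])).continuousAt.continuousWithinAt)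
    (fun x hx => aux_deriv_s11 z x hz (by linarith [hx.1]))
  have hb := aux_bound z ξ hz (by linarith)
  rw [hξ] at hb
  simp only [sub_sub_cancel, div_one] at hb
  have hb2 : z ^ 2 / ξ ^ 2 ≤ 4 * z ^ 2 * ν⁻¹ ^ 2 := by
    have h1 : ν / 2 ≤ ξ := by linarith
    calc z ^ 2 / ξ ^ 2 ≤ z ^ 2 / (ν / 2) ^ 2 := by gcongr
      _ = _ := by field_simp; norm_num
  have hb3 := hb.trans hb2
  have hl := aux_log ν hν2
  have e1 : Real.log (2 * (ν - 1) / z) = Real.log (1 - ν⁻¹) - Real.log (z / (2 * ν)) := by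
    have : 0 < 1 - ν⁻¹ := by
      have : ν⁻¹ ≤ 1 / 2 := by rw [inv_eq_one_div]; gcongr
      linarith
    rw [← Real.log_div this.ne' (by positivity)]
    congr 1; field_simp
  have e2 : Real.log (2 * ν / z) = - Real.log (z / (2 * ν)) := by
    rw [← Real.log_inv, inv_div]
  rw [e1, e2] at hb3
  generalize hE : ((ν - 1) * Real.log ((ν - 1) / z + Real.sqrt ((ν - 1) ^ 2 - z ^ 2) / z)
              - ν * Real.log (ν / z + Real.sqrt (ν ^ 2 - z ^ 2) / z))
            + (Real.sqrt (ν ^ 2 - z ^ 2) - Real.sqrt ((ν - 1) ^ 2 - z ^ 2)) = E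
  have hq : 0 < z / (2 * ν) := by positivity
  obtain ⟨s, hs⟩ : ∃ s, s = E - Real.log (z / (2 * ν)) := ⟨_, rfl⟩
  have hEs : Real.exp E = z / (2 * ν) * Real.exp s := by
    rw [hs, Real.exp_sub, Real.exp_log hq]; field_simp
  have hu : 0 < ν⁻¹ := by positivity
  have hu2 : ν⁻¹ ≤ 1 / 2 := by rw [inv_eq_one_div]; gcongr
  have hMu : M * ν⁻¹ ≤ 1 := by
    rw [← div_eq_mul_inv, div_le_one hν0]; linarith
  have hsu : |s - ν⁻¹ / 2| ≤ M * ν⁻¹ ^ 2 := by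
    rw [abs_le] at hb3 hl ⊢
    rw [hM, hs, ← hE]
    constructor <;> linarith [hb3.1, hb3.2, hl.1, hl.2]
  have e3 : z / (2 * ν) + z / 4 / ν ^ 2 = z / (2 * ν) * (1 + ν⁻¹ / 2) := by
    field_simp; ring
  rw [hEs, e3, ← mul_sub, abs_mul, abs_of_pos hq]
  have e4 : z * (M + 3) / 2 / ν ^ 3 = z / (2 * ν) * ((M + 3) * ν⁻¹ ^ 2) := by
    field_simp
  rw [e4]
  apply mul_le_mul_of_nonneg_left _ hq.le
  generalize ν⁻¹ = u at *
  have hs1 : |s| ≤ 3 / 2 * u := by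
    have : M * u ^ 2 ≤ u := by nlinarith
    rw [abs_le] at hsu ⊢
    constructor <;> linarith [hsu.1, hsu.2]
  have hs2 : s ^ 2 ≤ 9 / 4 * u ^ 2 := by
    rw [← sq_abs]; nlinarith [abs_nonneg s]
  have h5 := Real.abs_exp_sub_one_sub_id_le (x := s) (by linarith)
  rw [abs_le] at h5 hsu ⊢
  constructor <;> linarith [h5.1, h5.2, hsu.1, hsu.2, sq_nonneg u]
end

section
/- Let w > 0 and 0 < R' < R. Then the ratio of spherical Bessel functions of the second kind satisfies lim_{n→∞} (y_n(wR)/y_n(wR'))·(R/R')^{n+1} = 1; in particular y_n(wR') ≠ 0 for all sufficiently large n. -/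
noncomputable def Pp (n k : ℕ) : ℝ := ∏ i ∈ Finset.range k, ((2 * (i:ℝ) + 1) - 2 * n)

noncomputable def Aa (z : ℝ) (n k : ℕ) : ℝ := (-z^2/2)^k / (k.factorial * Pp n k)

noncomputable def Dd (n : ℕ) : ℝ := ∏ i ∈ Finset.range n, (2 * (i:ℝ) + 1)

lemma Dd_pos (n : ℕ) : 0 < Dd n := Finset.prod_pos fun i _ => by positivity

lemma Dd_succ (n : ℕ) : Dd (n+1) = Dd n * (2 * (n:ℝ) + 1) := Finset.prod_range_succ _ _

lemma Pp_succ (n k : ℕ) : Pp n (k+1) = Pp n k * ((2 * (k:ℝ) + 1) - 2 * n) :=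
  Finset.prod_range_succ _ _

lemma Pp_succ' (n k : ℕ) : Pp (n+1) (k+1) = Pp n k * (-1 - 2 * n) := by
  unfold Pp
  rw [Finset.prod_range_succ']
  congr 1
  · apply Finset.prod_congr rfl
    intro i _
    push_cast; ring
  · push_cast; ring

lemma Pp_abs (n k : ℕ) : 1 ≤ |Pp n k| := by
  induction k with
  | zero => simp [Pp]
  | succ k ih =>
    rw [Pp_succ, abs_mul]
    have h : (1:ℝ) ≤ |(2 * (k:ℝ) + 1) - 2 * n| := by
      have : (1:ℤ) ≤ |(2 * (k:ℤ) + 1) - 2 * n| := Int.one_le_abs (by omega)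
      exact_mod_cast this
    nlinarith

lemma Pp_ne (n k : ℕ) : Pp n k ≠ 0 := by
  have := Pp_abs n k
  intro h
  rw [h] at this
  norm_num at this

lemma Aa_bound (z : ℝ) (n k : ℕ) : ‖Aa z n k‖ ≤ (z^2/2)^k / k.factorial := by
  unfold Aa
  rw [norm_div, norm_mul, norm_pow]
  have e : ‖-z^2/2‖ = z^2/2 := by
    rw [neg_div, norm_neg, Real.norm_of_nonneg (by positivity)]
  rw [e, Real.norm_natCast, Real.norm_eq_abs]
  apply div_le_div_of_nonneg_left (by positivity) (by positivity)
  have := Pp_abs n k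
  have : (0:ℝ) < k.factorial := by positivity
  nlinarith

lemma Aa_summable (z : ℝ) (n : ℕ) : Summable (Aa z n) :=
  Summable.of_norm_bounded (Real.summable_pow_div_factorial (z^2/2)) (Aa_bound z n)

lemma fact_double (k : ℕ) : ((2*k).factorial : ℝ) = k.factorial * Pp 0 k * 2^k := by
  induction k with
  | zero => simp [Pp]
  | succ k ih =>
    rw [show 2 * (k+1) = 2*k+1+1 by ring, Nat.factorial_succ, Nat.factorial_succ, Pp_succ,
      Nat.factorial_succ]
    push_cast
    rw [ih]
    ring

lemma Aa_zero (z : ℝ) (k : ℕ) : Aa z 0 k = (-1)^k * z^(2*k) / (2*k).factorial := by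
  unfold Aa
  rw [fact_double, show -z^2/2 = (-1) * z^2 / 2 by ring, div_pow, mul_pow, ← pow_mul]
  have := Pp_ne 0 k
  field_simp

lemma sum_zero (z : ℝ) : HasSum (Aa z 0) (Real.cos z) := by
  have := Real.hasSum_cos z
  simpa only [← Aa_zero] using this

lemma Aa_one_succ (z : ℝ) (k : ℕ) :
    Aa z 1 (k+1) = Aa z 0 (k+1) + z * ((-1)^k * z^(2*k+1) / (2*k+1).factorial) := by
  have h1 : Aa z 1 (k+1) = Aa z 0 (k+1) * (-(2*k+1)) := by
    unfold Aa
    have e := Pp_succ' 0 k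
    norm_num at e
    rw [e, Pp_succ]
    have := Pp_ne 0 k
    have : (2*(k:ℝ)+1) ≠ 0 := by positivity
    push_cast
    simp only [mul_zero, sub_zero]
    field_simp
  rw [h1, Aa_zero, show 2 * (k+1) = 2*k+1+1 by ring, Nat.factorial_succ (2*k+1)]
  push_cast
  field_simp
  ring

lemma sum_one (z : ℝ) : HasSum (Aa z 1) (Real.cos z + z * Real.sin z) := by
  have h0 := (hasSum_nat_add_iff' 1).2 (sum_zero z)
  have h1 := h0.add ((Real.hasSum_sin z).mul_left z)
  simp only [← Aa_one_succ] at h1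
  rw [← hasSum_nat_add_iff' 1]
  convert h1 using 1
  simp [Aa, Pp]
  ring

lemma Aa_rec (z : ℝ) (n k : ℕ) :
    Aa z (n+2) (k+1) = Aa z (n+1) (k+1) - z^2/((2*n+3)*(2*n+1)) * Aa z n k := by
  unfold Aa
  have e1 := Pp_succ' (n+1) k
  have e2 := Pp_succ' n k
  have e3 := Pp_succ (n+1) k
  have n1 := Pp_ne n k
  have n2 := Pp_ne (n+1) k
  have hc : (2 * (k:ℝ) + 1) - 2 * ((n+1 : ℕ):ℝ) ≠ 0 := by
    intro h; rw [h, mul_zero] at e3; exact Pp_ne _ _ e3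
  have e4 : Pp (n+1) k = Pp n k * (-1 - 2*n) / ((2 * (k:ℝ) + 1) - 2 * ((n+1 : ℕ):ℝ)) := by
    rw [eq_div_iff hc, ← e3, e2]
  rw [show n + 2 = n+1+1 by ring, e1, e2, e4, Nat.factorial_succ]
  push_cast at hc ⊢
  have h1 : (2*(n:ℝ)+1) ≠ 0 := by positivity
  have h3 : (2*(n:ℝ)+3) ≠ 0 := by positivity
  have h1' : (-1 - 2*(n:ℝ)) ≠ 0 := by contrapose! h1; linarith
  have h3' : (-1 - 2*((n:ℝ)+1)) ≠ 0 := by contrapose! h3; linarith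
  have e5 : (-1 - 2*(n:ℝ)) = -(2*n+1) := by ring
  have e6 : (-1 - 2*((n:ℝ)+1)) = -(2*n+3) := by ring
  rw [e5, e6, pow_succ]
  field_simp
  ring

noncomputable def Ss (z : ℝ) (n : ℕ) : ℝ := ∑' k, Aa z n k

lemma Ss_rec (z : ℝ) (n : ℕ) :
    Ss z (n+2) = Ss z (n+1) - z^2/((2*n+3)*(2*n+1)) * Ss z n := by
  have h1 := (hasSum_nat_add_iff' 1).2 (Aa_summable z (n+1)).hasSum
  have h2 := h1.sub ((Aa_summable z n).hasSum.mul_left (z^2/((2*n+3)*(2*n+1))))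
  simp only [← Aa_rec] at h2
  have h3 := h2.unique ((hasSum_nat_add_iff' 1).2 (Aa_summable z (n+2)).hasSum)
  simp [Aa, Pp] at h3
  simp only [Ss, Aa, Pp]
  push_cast
  linarith

lemma ysph_eq (z : ℝ) (hz : z ≠ 0) (n : ℕ) :
    ysph n z = -(Dd n) / z^(n+1) * Ss z n := by
  induction n using Nat.twoStepInduction with
  | zero => simp [ysph, Dd, Ss, (sum_zero z).tsum_eq]; ring
  | one =>
    simp [ysph, Dd, Ss, (sum_one z).tsum_eq]
    field_simp
    ring
  | more n h0 h1 =>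
    rw [ysph, h0, h1, Ss_rec, Dd_succ (n+1), Dd_succ n]
    have h1 : (2*(n:ℝ)+1) ≠ 0 := by positivity
    have h3 : (2*(n:ℝ)+3) ≠ 0 := by positivity
    push_cast
    field_simp
    ring

lemma Aa_tendsto (z : ℝ) (k : ℕ) :
    Filter.Tendsto (fun n => Aa z n (k+1)) Filter.atTop (nhds 0) := by
  rw [← Filter.tendsto_add_atTop_iff_nat 1]
  have hb : ∀ n : ℕ, ‖Aa z (n+1) (k+1)‖ ≤
      (|(-z^2/2)^(k+1)|) * (1 / ((n:ℝ) + 1)) := by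
    intro n
    unfold Aa
    rw [Pp_succ', Real.norm_eq_abs, abs_div, ← div_eq_mul_one_div]
    apply div_le_div_of_nonneg_left (abs_nonneg _) (by positivity)
    rw [abs_mul, abs_mul, Nat.abs_cast, show (-1 - 2*(n:ℝ)) = -(2*n+1) by ring, abs_neg,
      abs_of_nonneg (by positivity : (0:ℝ) ≤ 2*n+1)]
    have a1 := Pp_abs n k
    have a2 : (1:ℝ) ≤ (k+1).factorial := by exact_mod_cast Nat.factorial_pos (k+1)
    have a3 : (1:ℝ) ≤ (k+1).factorial * |Pp n k| := by nlinarith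
    have a4 : (0:ℝ) ≤ n := by positivity
    nlinarith
  apply squeeze_zero_norm hb
  have h := (tendsto_one_div_add_atTop_nhds_zero_nat (𝕜 := ℝ)).const_mul (|(-z^2/2)^(k+1)|)
  rw [mul_zero] at h
  exact h

lemma Ss_tendsto (z : ℝ) : Filter.Tendsto (Ss z) Filter.atTop (nhds 1) := by
  have h := tendsto_tsum_of_dominated_convergence (f := fun n k => Aa z n k)
    (g := fun k : ℕ => if k = 0 then (1:ℝ) else 0) (𝓕 := Filter.atTop)
    (Real.summable_pow_div_factorial (z^2/2)) (by
      intro k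
      cases k with
      | zero => simp [Aa, Pp]
      | succ k => simpa using Aa_tendsto z k) (Filter.Eventually.of_forall (Aa_bound z))
  rw [tsum_ite_eq] at h
  exact h

/-- `y_n(wR)/y_n(wR') ~ (R'/R)^{n+1}`: the normalized ratio tends to 1, and in
particular `y_n(wR') ≠ 0` for all sufficiently large `n`. -/
theorem spherical_bessel_y_ratio_limit (w R R' : ℝ)
    (hw : 0 < w) (hR' : 0 < R') (hRR : R' < R) :
    Filter.Tendsto (fun n : ℕ => ysph n (w * R) / ysph n (w * R') * (R / R') ^ (n + 1))
      Filter.atTop (nhds 1) ∧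
    ∃ N : ℕ, ∀ n : ℕ, N ≤ n → ysph n (w * R') ≠ 0 := by
  have hz : w * R ≠ 0 := (mul_pos hw (hR'.trans hRR)).ne'
  have hz' : w * R' ≠ 0 := (mul_pos hw hR').ne'
  have hR0 : R ≠ 0 := (hR'.trans hRR).ne'
  constructor
  · have h := (Ss_tendsto (w * R)).div (Ss_tendsto (w * R')) one_ne_zero
    rw [div_one] at h
    refine h.congr ?_
    intro n
    rw [ysph_eq _ hz, ysph_eq _ hz', Pi.div_apply, mul_pow, mul_pow, div_pow]
    have hD := (Dd_pos n).ne'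
    have hw0 := hw.ne'
    have hR0' := hR'.ne'
    by_cases hS : Ss (w * R') n = 0
    · simp [hS]
    · field_simp
  · have h := (Ss_tendsto (w * R')).eventually_ne one_ne_zero
    obtain ⟨N, hN⟩ := Filter.eventually_atTop.1 h
    refine ⟨N, fun n hn => ?_⟩
    rw [ysph_eq _ hz']
    exact mul_ne_zero (div_ne_zero (neg_ne_zero.2 (Dd_pos n).ne') (pow_ne_zero _ hz')) (hN n hn)
end
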